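/- arXiv:1702.00914 — 2 statements merged into one kernel-verified Lean document; each statement's English description precedes it below -/
import Mathlib

section
/- Let G be a finite simple graph that is 2K2-free and has maximum degree Δ(G) ≥ 5. Then the chromatic number of G satisfies χ(G) ≤ max{Δ(G) − 1, ω(G)}, where ω(G) is the clique number of G. -/
/-- A simple graph is `2K2`-free if it has no four distinct vertices `a b c d` with
`ab` and `cd` edges and none of `ac, ad, bc, bd` an edge. -/
def TwoK2Free {V : Type*} (G : SimpleGraph V) : Prop :=
  ¬ ∃ a b c d : V, a ≠ b ∧ a ≠ c ∧ a ≠ d ∧ b ≠ c ∧ b ≠ d ∧ c ≠ d ∧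
      G.Adj a b ∧ G.Adj c d ∧ ¬ G.Adj a c ∧ ¬ G.Adj a d ∧ ¬ G.Adj b c ∧ ¬ G.Adj b d

/-!
By induction on `n ≥ 4`, a `2K₂`-free graph with maximum degree at most `n + 1` and without
`(n + 1)`-cliques is `n`-colourable; take `n = max (Δ - 1) ω`.

For the step from `n` to `n + 1`, any two `(n + 1)`-cliques meet by `2K₂`-freeness, and an
inequality of Hajnal then shows that all of them share a vertex, as in Kostochka's theorem on
hitting maximum cliques. Deleting a maximal independent set through this vertex lowers both the
maximum degree and the clique number.

For `n = 4` one may assume that the minimum degree is at least `4`. In a graph with a 4-clique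
`abcd`, the vertices without neighbours on `ab` are independent, and so are those without neighbours
on `cd`; the clique vertices can be paired so that few vertices remain, which are coloured by hand.
In a graph without 4-cliques some neighbourhood `N(v)` is not a 5-cycle, hence is bipartite. If its
complement is also bipartite we are done; otherwise that complement contains a triangle or an
induced 5-cycle, and the bound on the degrees leaves little room for the edges to `N(v)`.
-/

open SimpleGraph

section

variable {V : Type*} {G : SimpleGraph V}

/-! ### Colourings -/

lemma colorable_of_isIndepSet_cover {n : ℕ} (s : Fin n → Set V) (hs : ∀ i, G.IsIndepSet (s i))
    (hcover : ∀ v, ∃ i, v ∈ s i) : G.Colorable n := by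
  choose f hf using hcover
  exact ⟨Coloring.mk f fun {v w} hvw hfvw ↦ hs _ (hf v) (hfvw ▸ hf w) hvw.ne hvw⟩

lemma colorable_add_of_induce {s : Set V} {m n : ℕ} (hs : (G.induce s).Colorable m)
    (hsc : (G.induce sᶜ).Colorable n) : G.Colorable (m + n) := by
  classical
  obtain ⟨f⟩ := hs
  obtain ⟨g⟩ := hsc
  have hvalid : ∀ {v w}, G.Adj v w →
      (if hv : v ∈ s then Sum.inl (f ⟨v, hv⟩) else Sum.inr (g ⟨v, hv⟩) : Fin m ⊕ Fin n) ≠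
      if hw : w ∈ s then Sum.inl (f ⟨w, hw⟩) else Sum.inr (g ⟨w, hw⟩) := by
    intro v w hvw
    by_cases hv : v ∈ s <;> by_cases hw : w ∈ s <;> simp only [hv, hw, dite_true, dite_false, ne_eq,
      Sum.inl.injEq, Sum.inr.injEq, reduceCtorEq, not_false_eq_true]
    · exact f.valid (v := ⟨v, hv⟩) (w := ⟨w, hw⟩) hvw
    · exact g.valid (v := ⟨v, hv⟩) (w := ⟨w, hw⟩) hvw
  simpa using (Coloring.mk _ hvalid).colorable

lemma isIndepSet_iff_colorable_one_induce {s : Set V} :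
    G.IsIndepSet s ↔ (G.induce s).Colorable 1 := by
  rw [colorable_one_iff, ← SimpleGraph.cliqueFree_two, cliqueFree_induce_iff, cliqueFreeOn_two]
  rfl

lemma colorable_succ_of_induce_compl {s : Set V} {n : ℕ} (hs : G.IsIndepSet s)
    (hsc : (G.induce sᶜ).Colorable n) : G.Colorable (n + 1) :=
  Nat.add_comm 1 n ▸ colorable_add_of_induce (isIndepSet_iff_colorable_one_induce.1 hs) hsc

lemma colorable_of_induce_compl_singleton [G.LocallyFinite] {n : ℕ} {v : V} (hv : G.degree v < n)
    (h : (G.induce {v}ᶜ).Colorable n) : G.Colorable n := by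
  classical
  obtain ⟨f⟩ := h
  obtain ⟨c, hc⟩ : ∃ c, c ∉ (G.neighborFinset v).attach.image fun w : G.neighborFinset v ↦
      f ⟨w, ((G.mem_neighborFinset v w).1 w.2).ne'⟩ := by
    refine Finset.exists_mem_notMem_of_card_lt_card (t := Finset.univ) ?_ |>.imp fun _ ↦ And.right
    exact Finset.card_image_le.trans_lt <| by simpa using hv
  have hc' (w : V) (hvw : G.Adj v w) : f ⟨w, hvw.ne'⟩ ≠ c := fun hw ↦
    hc <| Finset.mem_image.2 ⟨⟨w, by simpa using hvw⟩, Finset.mem_attach _ _, hw⟩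
  refine ⟨Coloring.mk (fun w ↦ if hw : w = v then c else f ⟨w, hw⟩) fun {x y} hxy ↦ ?_⟩
  by_cases hx : x = v <;> by_cases hy : y = v
  · exact absurd (hx.trans hy.symm) hxy.ne
  · subst hx
    simpa [hy] using (hc' y hxy).symm
  · subst hy
    simpa [hx] using hc' x hxy.symm
  · simpa [hx, hy] using f.valid (v := ⟨x, hx⟩) (w := ⟨y, hy⟩) hxy

lemma colorable_of_forall_induce_le_degree [Finite V] {n : ℕ}
    (h : ∀ s : Set V, ∀ [(G.induce s).LocallyFinite], (∀ v, n ≤ (G.induce s).degree v) →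
      (G.induce s).Colorable n) : G.Colorable n := by
  classical
  have := Fintype.ofFinite V
  suffices ∀ s : Set V, (G.induce s).Colorable n from
    (this Set.univ).of_hom (G.induceUnivIso.symm.toHom)
  by_contra! hne
  obtain ⟨s, hs⟩ := exists_minimal_of_wellFoundedLT _ hne
  refine hs.prop <| h s fun v ↦ ?_
  by_contra! hv
  refine hs.prop <| colorable_of_induce_compl_singleton hv ?_
  have hsv : (G.induce (s \ {v.1})).Colorable n := by
    by_contra hsv
    exact (hs.le_of_le hsv Set.sdiff_subset v.2).2 rfl
  exact hsv.of_hom ⟨fun x ↦ ⟨x.1, x.1.2, fun hx ↦ x.2 (Subtype.ext hx)⟩, id⟩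

/-! ### Maximal independent sets -/

lemma exists_maximal_isIndepSet {s t : Set V} (hs : G.IsIndepSet s) (hst : s ⊆ t) :
    ∃ m, s ⊆ m ∧ m ⊆ t ∧ G.IsIndepSet m ∧ ∀ x ∈ t, x ∉ m → ∃ y ∈ m, G.Adj x y := by
  obtain ⟨m, hsm, hm⟩ := zorn_subset_nonempty {m | m ⊆ t ∧ G.IsIndepSet m}
    (fun C hC hchain _ ↦ ⟨⋃₀ C, ⟨Set.sUnion_subset fun m hm ↦ (hC hm).1,
      (Set.pairwise_sUnion hchain.directedOn).2 fun m hm ↦ (hC hm).2⟩,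
        fun m ↦ Set.subset_sUnion_of_mem⟩) s ⟨hst, hs⟩
  refine ⟨m, hsm, hm.prop.1, hm.prop.2, fun x hxt hxm ↦ ?_⟩
  by_contra! hx
  have : insert x m ≤ m := hm.le_of_ge ⟨Set.insert_subset hxt hm.prop.1,
    hm.prop.2.insert fun y hy _ ↦ ⟨hx y hy, fun hyx ↦ hx y hy hyx.symm⟩⟩ (Set.subset_insert x m)
  exact hxm (this (Set.mem_insert x m))

/-! ### `2K₂`-free graphs -/

namespace TwoK2Free

lemma adj_or (h : TwoK2Free G) {a b c d : V} (hab : G.Adj a b) (hcd : G.Adj c d) :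
    G.Adj a c ∨ G.Adj a d ∨ G.Adj b c ∨ G.Adj b d := by
  by_contra! hne
  obtain ⟨hac, had, hbc, hbd⟩ := hne
  exact h ⟨a, b, c, d, hab.ne, by rintro rfl; exact had hcd, by rintro rfl; exact hac hcd.symm,
    by rintro rfl; exact hbd hcd, by rintro rfl; exact hbc hcd.symm, hcd.ne, hab, hcd,
    hac, had, hbc, hbd⟩

lemma induce (h : TwoK2Free G) (s : Set V) : TwoK2Free (G.induce s) := by
  rintro ⟨a, b, c, d, -, -, -, -, -, -, hab, hcd, hac, had, hbc, hbd⟩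
  have := h.adj_or (a := a.1) (b := b.1) (c := c.1) (d := d.1) hab hcd
  tauto

lemma isIndepSet_of_forall_not_adj (h : TwoK2Free G) {s : Set V} {a b : V} (hab : G.Adj a b)
    (ha : ∀ x ∈ s, ¬ G.Adj a x) (hb : ∀ x ∈ s, G.Adj b x → x = a) : G.IsIndepSet s := by
  intro x hx y hy _ hxy
  rcases h.adj_or hab hxy with hax | hay | hbx | hby
  · exact ha x hx hax
  · exact ha y hy hay
  · exact ha y hy (hb x hx hbx ▸ hxy)
  · exact ha x hx (hb y hy hby ▸ hxy.symm)

end TwoK2Free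

/-! ### Small cliques -/

lemma not_cliqueFree_four {a b c d : V} (hab : G.Adj a b) (hac : G.Adj a c) (had : G.Adj a d)
    (hbc : G.Adj b c) (hbd : G.Adj b d) (hcd : G.Adj c d) : ¬ G.CliqueFree 4 := by
  classical
  refine ((is3Clique_triple_iff.2 ⟨hbc, hbd, hcd⟩).insert (a := a) ?_).not_cliqueFree
  simp [hab, hac, had]

/-! ### Triangle-free graphs -/

lemma not_adj_of_cliqueFree_three (h : G.CliqueFree 3) {a b c : V} (hab : G.Adj a b)
    (hbc : G.Adj b c) : ¬ G.Adj a c := by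
  classical
  exact fun hac ↦ h {a, b, c} <| is3Clique_triple_iff.2 ⟨hab, hac, hbc⟩

lemma cycleGraph_five_isIndContained_of_cliqueFree_three (h : G.CliqueFree 3) {c : Fin 5 → V}
    (hadj : ∀ i, G.Adj (c i) (c (i + 1))) : cycleGraph 5 ⊴ G := by
  have hnot (i : Fin 5) : ¬ G.Adj (c i) (c (i + 2)) :=
    not_adj_of_cliqueFree_three h (hadj i) (by simpa [add_assoc] using hadj (i + 1))
  have cases_sub : ∀ i j : Fin 5, i = j ∨ j = i + 1 ∨ i = j + 1 ∨ j = i + 2 ∨ i = j + 2 := by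
    decide
  have ne_add_two (i : Fin 5) : c i ≠ c (i + 2) := fun hi ↦ by
    have h₁ := hadj (i + 2)
    have h₂ := hnot (i + 3)
    rw [← hi, add_assoc] at h₁
    rw [add_assoc, show (3 + 2 : Fin 5) = 0 from rfl, add_zero] at h₂
    exact h₂ h₁.symm
  have hinj : c.Injective := by
    intro i j hij
    rcases cases_sub i j with h | rfl | rfl | rfl | rfl
    · exact h
    · exact absurd hij (hadj i).ne
    · exact absurd hij (hadj j).ne'
    · exact absurd hij (ne_add_two i)
    · exact absurd hij.symm (ne_add_two j)
  refine ⟨⟨⟨c, hinj⟩, fun {i j} ↦ ?_⟩⟩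
  have hC : (cycleGraph 5).Adj i j ↔ j = i + 1 ∨ i = j + 1 := by
    revert i j; decide
  rw [Function.Embedding.coeFn_mk, hC]
  refine ⟨fun hij ↦ ?_, ?_⟩
  · rcases cases_sub i j with rfl | h | h | rfl | rfl
    · exact absurd rfl hij.ne
    · exact .inl h
    · exact .inr h
    · exact absurd hij (hnot i)
    · exact absurd hij.symm (hnot j)
  · rintro (rfl | rfl)
    · exact hadj i
    · exact (hadj j).symm

theorem TwoK2Free.colorable_two (h : TwoK2Free G) (h₃ : G.CliqueFree 3)
    (h₅ : ¬ cycleGraph 5 ⊴ G) : G.Colorable 2 := by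
  by_cases hG : ∃ u v, G.Adj u v
  swap
  · have hbot : G = ⊥ := by
      ext u v
      simpa using fun huv ↦ hG ⟨u, v, huv⟩
    exact (colorable_one_iff.2 hbot).mono one_le_two
  obtain ⟨u, v, huv⟩ := hG
  let J : Set V := {x | ∃ p, G.Adj u p ∧ G.Adj p x}
  have hJ : G.IsIndepSet J := by
    rintro x ⟨p, hup, hpx⟩ y ⟨q, huq, hqy⟩ - hxy
    refine h₅ <| cycleGraph_five_isIndContained_of_cliqueFree_three h₃ (c := ![u, p, x, y, q]) ?_
    intro i
    fin_cases i
    exacts [hup, hpx, hxy, hqy.symm, huq.symm]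
  have hJc : G.IsIndepSet Jᶜ := by
    intro x hx y hy _ hxy
    rcases h.adj_or huv hxy with hux | huy | hvx | hvy
    · exact hy ⟨x, hux, hxy⟩
    · exact hx ⟨y, huy, hxy.symm⟩
    · exact hx ⟨v, huv, hvx⟩
    · exact hy ⟨v, huv, hvy⟩
  exact colorable_succ_of_induce_compl hJ (isIndepSet_iff_colorable_one_induce.1 hJc)

/-! ### Locally pentagonal graphs -/

section Pentagon

variable (e : cycleGraph 5 ≃g G)
include e

lemma exists_adj_not_adj_of_iso_cycleGraph_five {x a : V} (hxa : G.Adj x a) :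
    ∃ b ≠ a, G.Adj x b ∧ ¬ G.Adj a b := by
  have key : ∀ i j : Fin 5, (cycleGraph 5).Adj i j →
      ∃ k ≠ j, (cycleGraph 5).Adj i k ∧ ¬ (cycleGraph 5).Adj j k := by decide
  obtain ⟨i, rfl⟩ := e.surjective x
  obtain ⟨j, rfl⟩ := e.surjective a
  obtain ⟨k, hkj, hik, hjk⟩ := key i j (e.map_adj_iff.1 hxa)
  exact ⟨e k, e.injective.ne hkj, e.map_adj_iff.2 hik, mt e.map_adj_iff.1 hjk⟩

lemma not_adj_iff_adj_of_iso_cycleGraph_five {s t a b : V} (hst : s ≠ t) (has : G.Adj a s)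
    (hat : G.Adj a t) (hba : b ≠ a) (hab : ¬ G.Adj a b) : ¬ (G.Adj b s ↔ G.Adj b t) := by
  have key : ∀ i j k l : Fin 5, i ≠ j → (cycleGraph 5).Adj k i → (cycleGraph 5).Adj k j →
      l ≠ k → ¬ (cycleGraph 5).Adj k l → ¬ ((cycleGraph 5).Adj l i ↔ (cycleGraph 5).Adj l j) := by
    decide
  obtain ⟨i, rfl⟩ := e.surjective s
  obtain ⟨j, rfl⟩ := e.surjective t
  obtain ⟨k, rfl⟩ := e.surjective a
  obtain ⟨l, rfl⟩ := e.surjective b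
  simp only [e.map_adj_iff, ne_eq, e.injective.eq_iff] at *
  exact key i j k l hst has hat hba hab

end Pentagon

lemma not_adj_iff_adj_of_neighborSet_iso_cycleGraph_five {w s t a b : V}
    (e : cycleGraph 5 ≃g G.induce (G.neighborSet w)) (hws : G.Adj w s) (hwt : G.Adj w t)
    (hwa : G.Adj w a) (hwb : G.Adj w b) (hst : s ≠ t) (has : G.Adj a s) (hat : G.Adj a t)
    (hba : b ≠ a) (hab : ¬ G.Adj a b) : ¬ (G.Adj b s ↔ G.Adj b t) :=
  not_adj_iff_adj_of_iso_cycleGraph_five e (s := ⟨s, hws⟩) (t := ⟨t, hwt⟩) (a := ⟨a, hwa⟩)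
    (b := ⟨b, hwb⟩) (mt (congrArg Subtype.val) hst) has hat (mt (congrArg Subtype.val) hba) hab

theorem TwoK2Free.not_forall_neighborSet_iso_cycleGraph_five [Nonempty V] (h : TwoK2Free G) :
    ¬ ∀ v, Nonempty (cycleGraph 5 ≃g G.induce (G.neighborSet v)) := by
  intro hloc
  have v : V := Classical.arbitrary V
  obtain ⟨e⟩ := hloc v
  have vc (i : Fin 5) : G.Adj v (e i) := (e i).2
  have adj_iff (i j : Fin 5) : G.Adj (e i) (e j) ↔ (cycleGraph 5).Adj i j :=
    e.map_adj_iff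
  have not_adj_iff {p : V} (hpv : p ≠ v) (hvp : ¬ G.Adj v p) {i j k : Fin 5} (hip : G.Adj (e i) p)
      (hij : (cycleGraph 5).Adj i j) (hik : (cycleGraph 5).Adj i k) (hjk : j ≠ k) :
      ¬ (G.Adj p (e j) ↔ G.Adj p (e k)) := by
    obtain ⟨f⟩ := hloc (e i)
    exact not_adj_iff_adj_of_neighborSet_iso_cycleGraph_five f ((adj_iff i j).2 hij)
      ((adj_iff i k).2 hik) (vc i).symm hip (fun h ↦ hjk (e.injective (Subtype.ext h))) (vc j)
      (vc k) hpv hvp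
  obtain ⟨p, hpv, h0p, h1p, hvp⟩ : ∃ p ≠ v, G.Adj (e 0) p ∧ G.Adj (e 1) p ∧ ¬ G.Adj v p := by
    obtain ⟨f⟩ := hloc (e 0)
    obtain ⟨⟨p, h0p⟩, hpv, h1p, hvp⟩ := exists_adj_not_adj_of_iso_cycleGraph_five f
      (x := ⟨e 1, (adj_iff 0 1).2 (by decide)⟩) (a := ⟨v, (vc 0).symm⟩) (vc 1).symm
    exact ⟨p, fun h ↦ hpv (Subtype.ext h), h0p, h1p, hvp⟩
  have hp2 : ¬ G.Adj p (e 2) := by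
    have := not_adj_iff hpv hvp h1p (j := 0) (k := 2) (by decide) (by decide) (by decide)
    simpa [h0p.symm] using this
  have hp4 : ¬ G.Adj p (e 4) := by
    have := not_adj_iff hpv hvp h0p (j := 1) (k := 4) (by decide) (by decide) (by decide)
    simpa [h1p.symm] using this
  have hp3 : G.Adj p (e 3) := by
    have := h.adj_or h0p ((adj_iff 2 3).2 (by decide))
    have h02 : ¬ (cycleGraph 5).Adj 0 2 := by decide
    have h03 : ¬ (cycleGraph 5).Adj 0 3 := by decide
    simpa [adj_iff, h02, h03, hp2] using this
  have := not_adj_iff hpv hvp hp3.symm (j := 2) (k := 4) (by decide) (by decide) (by decide)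
  simp [hp2, hp4] at this

/-! ### A triangle among the non-neighbours of a vertex -/

section Triangle

open Finset

lemma card_filter_adj_add_card_le_degree [G.LocallyFinite] [DecidableRel G.Adj] (a v : V)
    {t : Finset V} (ha : ∀ x ∈ t, G.Adj a x) (hv : ∀ x ∈ t, ¬ G.Adj v x) :
    #{u ∈ G.neighborFinset v | G.Adj a u} + #t ≤ G.degree a := by
  classical
  rw [← card_union_of_disjoint, ← card_neighborFinset_eq_degree]
  · refine card_le_card fun x hx ↦ ?_
    rw [mem_neighborFinset]
    simp only [mem_union, mem_filter] at hx
    exact hx.elim And.right (ha x)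
  · exact disjoint_right.2 fun x hx hvx ↦ hv x hx <| by simpa using (mem_filter.1 hvx).1

namespace TwoK2Free

lemma adj_or_adj_of_not_adj (h : TwoK2Free G) {v u a b : V} (hvu : G.Adj v u) (hab : G.Adj a b)
    (hva : ¬ G.Adj v a) (hvb : ¬ G.Adj v b) : G.Adj a u ∨ G.Adj b u := by
  simpa [hva, hvb, G.adj_comm u] using h.adj_or hvu hab

variable [G.LocallyFinite] {v a b c : V}

lemma two_mul_degree_le_of_triangle [DecidableRel G.Adj] (h : TwoK2Free G)
    (hab : G.Adj a b) (hac : G.Adj a c) (hbc : G.Adj b c)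
    (hva : ¬ G.Adj v a) (hvb : ¬ G.Adj v b) (hvc : ¬ G.Adj v c) :
    2 * G.degree v ≤ #{u ∈ G.neighborFinset v | G.Adj a u} + #{u ∈ G.neighborFinset v | G.Adj b u}
      + #{u ∈ G.neighborFinset v | G.Adj c u} := by
  simp only [card_filter, ← sum_add_distrib]
  rw [← card_neighborFinset_eq_degree, mul_comm, ← smul_eq_mul]
  refine card_nsmul_le_sum _ _ _ fun u hu ↦ ?_
  have hvu : G.Adj v u := (G.mem_neighborFinset v u).1 hu
  have := h.adj_or_adj_of_not_adj hvu hab hva hvb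
  have := h.adj_or_adj_of_not_adj hvu hac hva hvc
  have := h.adj_or_adj_of_not_adj hvu hbc hvb hvc
  grind

/- Each of `a`, `b`, `c` has at most three neighbours off the triangle, and at least two of them
have a neighbour on any given edge `xy` outside. This leaves at most seven edges from the triangle
to `N(v)`, whereas `2K₂`-freeness forces at least eight. -/
lemma isIndepSet_compl_neighborSet_sdiff_triangle (h : TwoK2Free G) (hΔ : ∀ x, G.degree x ≤ 5)
    (hv : 4 ≤ G.degree v) (hab : G.Adj a b) (hac : G.Adj a c) (hbc : G.Adj b c)
    (hva : ¬ G.Adj v a) (hvb : ¬ G.Adj v b) (hvc : ¬ G.Adj v c) :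
    G.IsIndepSet ((G.neighborSet v)ᶜ \ {a, b, c}) := by
  classical
  intro x hx y hy _ hxy
  simp only [Set.mem_sdiff, Set.mem_compl_iff, mem_neighborSet, Set.mem_insert_iff,
    Set.mem_singleton_iff, not_or] at hx hy
  let E (z : V) : Finset V := {w ∈ {x, y} | G.Adj z w}
  have card_E_pos {z : V} (hz : G.Adj z x ∨ G.Adj z y) : 0 < #(E z) := by
    rcases hz with hz | hz
    exacts [card_pos.2 ⟨x, by simp [E, hz]⟩, card_pos.2 ⟨y, by simp [E, hz]⟩]
  have card_le {z z₁ z₂ : V} (h₁ : G.Adj z z₁) (h₂ : G.Adj z z₂) (h₁₂ : G.Adj z₁ z₂)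
      (hz₁ : z₁ ∉ insert x {y} ∪ G.neighborSet v) (hz₂ : z₂ ∉ insert x {y} ∪ G.neighborSet v) :
      #{u ∈ G.neighborFinset v | G.Adj z u} + (2 + #(E z)) ≤ 5 := by
    rw [← card_pair h₁₂.ne, ← card_union_of_disjoint]
    · refine (card_filter_adj_add_card_le_degree z v ?_ ?_).trans (hΔ z) <;> grind [mem_neighborSet]
    · grind [Finset.disjoint_left, mem_neighborSet]
  have ha : a ∉ insert x {y} ∪ G.neighborSet v := by grind [mem_neighborSet]
  have hb : b ∉ insert x {y} ∪ G.neighborSet v := by grind [mem_neighborSet]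
  have hc : c ∉ insert x {y} ∪ G.neighborSet v := by grind [mem_neighborSet]
  have := card_le hab hac hbc hb hc
  have := card_le hab.symm hbc hac ha hc
  have := card_le hac.symm hbc.symm hab ha hb
  have := h.two_mul_degree_le_of_triangle hab hac hbc hva hvb hvc
  have := h.adj_or hab hxy
  have := h.adj_or hac hxy
  have := h.adj_or hbc hxy
  grind

theorem colorable_four_of_triangle_of_forall_not_adj (h : TwoK2Free G) (h₄ : G.CliqueFree 4)
    (hΔ : ∀ x, G.degree x ≤ 5) (hv : 4 ≤ G.degree v) (hab : G.Adj a b) (hac : G.Adj a c)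
    (hbc : G.Adj b c) (hva : ¬ G.Adj v a) (hvb : ¬ G.Adj v b) (hvc : ¬ G.Adj v c) :
    G.Colorable 4 := by
  have isIndepSet {z z₁ z₂ : V} (h₁ : G.Adj z z₁) (h₂ : G.Adj z z₂) (h₁₂ : G.Adj z₁ z₂)
      (hz : ¬ G.Adj v z) (hz₁ : ¬ G.Adj v z₁) (hz₂ : ¬ G.Adj v z₂) :
      G.IsIndepSet {x | x = z ∨ G.Adj v x ∧ ¬ G.Adj z x} := by
    have adj {x : V} (hvx : G.Adj v x) (hzx : ¬ G.Adj z x) : G.Adj z₁ x ∧ G.Adj z₂ x :=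
      ⟨(h.adj_or_adj_of_not_adj hvx h₁ hz hz₁).resolve_left hzx,
        (h.adj_or_adj_of_not_adj hvx h₂ hz hz₂).resolve_left hzx⟩
    rintro x (rfl | ⟨hvx, hzx⟩) y (rfl | ⟨hvy, hzy⟩) hne hxy
    · exact hne rfl
    · exact hzy hxy
    · exact hzx hxy.symm
    · exact not_cliqueFree_four h₁₂ (adj hvx hzx).1 (adj hvy hzy).1 (adj hvx hzx).2 (adj hvy hzy).2
        hxy h₄
  refine colorable_of_isIndepSet_cover ![{x | x = a ∨ G.Adj v x ∧ ¬ G.Adj a x},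
    {x | x = b ∨ G.Adj v x ∧ ¬ G.Adj b x}, {x | x = c ∨ G.Adj v x ∧ ¬ G.Adj c x},
    (G.neighborSet v)ᶜ \ {a, b, c}] ?_ ?_
  · intro i
    fin_cases i
    · exact isIndepSet hab hac hbc hva hvb hvc
    · exact isIndepSet hab.symm hbc hac hvb hva hvc
    · exact isIndepSet hac.symm hbc.symm hab hvc hva hvb
    · exact h.isIndepSet_compl_neighborSet_sdiff_triangle hΔ hv hab hac hbc hva hvb hvc
  · intro x
    have := fun hax hbx hcx ↦ not_cliqueFree_four (d := x) hab hac hax hbc hbx hcx h₄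
    simp only [Fin.exists_fin_succ, Matrix.cons_val_zero, Matrix.cons_val_succ,
      Matrix.cons_val_fin_one, Set.mem_ofPred_eq, Set.mem_sdiff, Set.mem_compl_iff, mem_neighborSet,
      Set.mem_insert_iff, Set.mem_singleton_iff, exists_const]
    tauto

end TwoK2Free

end Triangle

/-! ### An induced 5-cycle among the non-neighbours of a vertex -/

section Cycle

open Finset

lemma card_le_two_of_isIndepSet_cycleGraph_five :
    ∀ s : Finset (Fin 5), (cycleGraph 5).IsIndepSet s → #s ≤ 2 := by
  unfold IsIndepSet Set.Pairwise
  simp only [Finset.mem_coe]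
  decide

lemma card_filter_adj_adj_le_two [DecidableRel G.Adj] {c : cycleGraph 5 ↪g G}
    (h₄ : G.CliqueFree 4) {x y : V} (hxy : G.Adj x y) :
    #{i | G.Adj x (c i) ∧ G.Adj y (c i)} ≤ 2 := by
  refine card_le_two_of_isIndepSet_cycleGraph_five _ fun i hi j hj _ hij ↦ ?_
  simp only [coe_filter, mem_univ, true_and, Set.mem_ofPred_eq] at hi hj
  exact not_cliqueFree_four hxy hi.1 hj.1 hi.2 hj.2 (c.map_adj_iff.2 hij) h₄

namespace TwoK2Free

variable (h : TwoK2Free G) {v : V} {c : cycleGraph 5 ↪g G} (hvc : ∀ i, ¬ G.Adj v (c i))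
include h hvc

lemma three_le_card_filter_adj_cycle [DecidableRel G.Adj] {u : V} (hvu : G.Adj v u) :
    3 ≤ #{i | G.Adj u (c i)} := by
  have : #{i | ¬ G.Adj u (c i)} ≤ 2 := by
    refine card_le_two_of_isIndepSet_cycleGraph_five _ fun i hi j hj _ hij ↦ ?_
    rcases h.adj_or_adj_of_not_adj hvu (c.map_adj_iff.2 hij) (hvc i) (hvc j) with hiu | hju
    · simp [hiu.symm] at hi
    · simp [hju.symm] at hj
  have := card_filter_add_card_filter_not (s := univ) fun i ↦ G.Adj u (c i)
  simp only [card_univ, Fintype.card_fin] at this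
  lia

variable [G.LocallyFinite]

lemma eq_or_mem_range_of_adj {u x y : V} (hu : G.degree u ≤ 5) (hvu : G.Adj v u) (hvx : G.Adj v x)
    (hux : G.Adj u x) (huy : G.Adj u y) : y = v ∨ y = x ∨ y ∈ Set.range c := by
  classical
  by_contra! hy
  let C : Finset V := map c.toEmbedding {i | G.Adj u (c i)}
  have hC : 3 ≤ #C := (h.three_le_card_filter_adj_cycle hvc hvu).trans_eq (card_map _).symm
  have hv (i : Fin 5) : c i ≠ v := by
    rintro rfl
    have hi : ∀ i : Fin 5, (cycleGraph 5).Adj i (i + 1) := by decide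
    exact hvc (i + 1) (c.map_adj_iff.2 (hi i))
  have hx (i : Fin 5) : c i ≠ x := fun hi ↦ hvc i (hi ▸ hvx)
  have hdisj : Disjoint {v, x, y} C := by
    simp only [Finset.disjoint_left, C, mem_map, mem_filter, mem_univ, true_and]
    rintro z hz ⟨i, -, rfl⟩
    simp only [mem_insert, mem_singleton] at hz
    exact hz.elim (hv i) fun hz ↦ hz.elim (hx i) fun hz ↦ hy.2.2 ⟨i, hz⟩
  have hsub : {v, x, y} ∪ C ⊆ G.neighborFinset u := by
    simp [hvu.symm, hux, huy, C, subset_iff]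
  have := card_le_card hsub
  rw [card_union_of_disjoint hdisj, card_eq_three.2 ⟨v, x, y, hvx.ne, hy.1.symm, hy.2.1.symm, rfl⟩,
    card_neighborFinset_eq_degree] at this
  lia

lemma eq_of_adj_of_adj {u x y : V} (hu : G.degree u ≤ 5) (hvu : G.Adj v u) (hvx : G.Adj v x)
    (hvy : G.Adj v y) (hux : G.Adj u x) (huy : G.Adj u y) : y = x := by
  obtain rfl | rfl | ⟨i, rfl⟩ := h.eq_or_mem_range_of_adj hvc hu hvu hvx hux huy
  · exact absurd hvy (G.irrefl)
  · rfl
  · exact absurd hvy (hvc i)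

lemma two_mul_card_edgeFinset_induce_neighborSet_le [DecidableRel G.Adj]
    (hΔ : ∀ x, G.degree x ≤ 5) :
    2 * #(G.induce (G.neighborSet v)).edgeFinset ≤ G.degree v := by
  rw [← sum_degrees_eq_twice_card_edges, ← card_neighborSet_eq_degree, ← card_univ,
    ← mul_one #univ, ← smul_eq_mul]
  refine sum_le_card_nsmul univ _ 1 fun u _ ↦ card_le_one.2 fun a ha b hb ↦ Subtype.ext ?_
  rw [mem_neighborFinset] at ha hb
  exact h.eq_of_adj_of_adj hvc (hΔ u) u.2 b.2 a.2 hb ha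

/- The edges inside `N(v)` form a matching, so there are at most two of them, and the ends of each
have at most two common neighbours on the cycle. -/
lemma exists_forall_adj_not_adj_cycle (h₄ : G.CliqueFree 4) (hΔ : ∀ x, G.degree x ≤ 5) :
    ∃ j, ∀ x y, G.Adj v x → G.Adj v y → G.Adj x y → ¬ G.Adj x (c j) ∨ ¬ G.Adj y (c j) := by
  classical
  by_contra! hne
  have hedge (j : Fin 5) :
      ∃ x y : G.neighborSet v, G.Adj x y ∧ G.Adj x (c j) ∧ G.Adj y (c j) := by
    obtain ⟨x, y, hvx, hvy, hxy, hx, hy⟩ := hne j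
    exact ⟨⟨x, hvx⟩, ⟨y, hvy⟩, hxy, hx, hy⟩
  choose x y hxy hx hy using hedge
  let e (j : Fin 5) : Sym2 (G.neighborSet v) := s(x j, y j)
  have he : univ.image e ⊆ (G.induce (G.neighborSet v)).edgeFinset := by
    intro d hd
    obtain ⟨j, -, rfl⟩ := mem_image.1 hd
    exact mem_edgeFinset.2 (hxy j)
  have hfibre : ∀ d ∈ univ.image e, #{j | e j = d} ≤ 2 := by
    intro d hd
    obtain ⟨i, -, rfl⟩ := mem_image.1 hd
    refine (card_le_card ?_).trans (card_filter_adj_adj_le_two (c := c) h₄ (hxy i))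
    intro j hj
    obtain ⟨hxj, hyj⟩ | ⟨hxj, hyj⟩ : (x j = x i ∧ y j = y i) ∨ (x j = y i ∧ y j = x i) := by
      simpa [e] using hj
    · exact mem_filter.2 ⟨mem_univ j, hxj ▸ hx j, hyj ▸ hy j⟩
    · exact mem_filter.2 ⟨mem_univ j, hyj ▸ hy j, hxj ▸ hx j⟩
  have := h.two_mul_card_edgeFinset_induce_neighborSet_le hvc hΔ
  have := hΔ v
  have := card_le_card he
  have := card_le_mul_card_image univ 2 hfibre
  simp only [card_univ, Fintype.card_fin] at this
  lia

lemma exists_isIndepSet_isIndepSet_sdiff_neighborSet (h₄ : G.CliqueFree 4)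
    (hΔ : ∀ x, G.degree x ≤ 5) :
    ∃ j, ∃ P ⊆ G.neighborSet v, G.IsIndepSet P ∧ G.IsIndepSet (G.neighborSet v \ P) ∧
      ∀ p ∈ P, ¬ G.Adj p (c j) ∧ ∃ x, G.Adj v x ∧ G.Adj p x := by
  obtain ⟨j, hj⟩ := h.exists_forall_adj_not_adj_cycle hvc h₄ hΔ
  obtain ⟨P, -, hPW, hP, hmax⟩ := exists_maximal_isIndepSet (G := G) (s := ∅)
    (t := {u | G.Adj v u ∧ ¬ G.Adj u (c j) ∧ ∃ x, G.Adj v x ∧ G.Adj u x}) (by simp) (by simp)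
  have not_adj {x y : V} (hx : x ∈ G.neighborSet v \ P) (hy : y ∈ G.neighborSet v \ P)
      (hxj : ¬ G.Adj x (c j)) : ¬ G.Adj x y := by
    intro hxy
    obtain ⟨p, hpP, hxp⟩ := hmax x ⟨hx.1, hxj, y, hy.1, hxy⟩ hx.2
    have hpy : p = y := h.eq_of_adj_of_adj hvc (hΔ x) hx.1 hy.1 (hPW hpP).1 hxy hxp
    exact hy.2 (hpy ▸ hpP)
  refine ⟨j, P, fun p hp ↦ (hPW hp).1, hP, fun x hx y hy _ hxy ↦ ?_, fun p hp ↦ (hPW hp).2⟩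
  rcases hj x y hx.1 hy.1 hxy with hxj | hyj
  · exact not_adj hx hy hxj hxy
  · exact not_adj hy hx hyj hxy.symm

lemma not_adj_of_adj_of_not_adj_cycle {p x y : V} {j : Fin 5} (hp : G.degree p ≤ 5)
    (hvp : G.Adj v p) (hvy : G.Adj v y) (hpy : G.Adj p y) (hpj : ¬ G.Adj p (c j))
    (hvx : ¬ G.Adj v x) (hxv : x ≠ v) (h₂ : ¬ G.Adj (c (j + 2)) x) (h₃ : ¬ G.Adj (c (j + 3)) x) :
    ¬ G.Adj p x := by
  intro hpx
  obtain rfl | rfl | ⟨i, rfl⟩ := h.eq_or_mem_range_of_adj hvc hp hvp hvy hpy hpx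
  · exact hxv rfl
  · exact hvx hvy
  · have eq_of_not_adj : ∀ i j : Fin 5, ¬ (cycleGraph 5).Adj (j + 2) i →
        ¬ (cycleGraph 5).Adj (j + 3) i → i = j := by decide
    have hij := eq_of_not_adj i j (mt c.map_adj_iff.2 h₂) (mt c.map_adj_iff.2 h₃)
    exact hpj (hij ▸ hpx)

theorem colorable_four_of_cycle_of_forall_not_adj (h₄ : G.CliqueFree 4)
    (hΔ : ∀ x, G.degree x ≤ 5) (hM : (G.induce (G.neighborSet v)ᶜ).CliqueFree 3) :
    G.Colorable 4 := by
  obtain ⟨j, P, hPN, hP, hNP, hPj⟩ :=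
    h.exists_isIndepSet_isIndepSet_sdiff_neighborSet hvc h₄ hΔ
  have not_adj {x y z : V} (hx : ¬ G.Adj v x) (hy : ¬ G.Adj v y) (hz : ¬ G.Adj v z)
      (hxy : G.Adj x y) (hyz : G.Adj y z) : ¬ G.Adj x z :=
    not_adj_of_cliqueFree_three hM (a := ⟨x, hx⟩) (b := ⟨y, hy⟩) (c := ⟨z, hz⟩) hxy hyz
  have indep_common (i : Fin 5) : G.IsIndepSet {x | ¬ G.Adj v x ∧ G.Adj (c i) x} := by
    intro x hx y hy _ hxy
    exact not_adj (hvc i) hx.1 hy.1 hx.2 hxy hy.2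
  let R : Set V := {x | ¬ G.Adj v x ∧ x ≠ v ∧ ¬ G.Adj (c (j + 2)) x ∧ ¬ G.Adj (c (j + 3)) x}
  have cycle_adj : ∀ j : Fin 5, (cycleGraph 5).Adj (j + 2) (j + 3) := by decide
  have hR : G.IsIndepSet R := h.isIndepSet_of_forall_not_adj (c.map_adj_iff.2 (cycle_adj j))
    (fun x hx ↦ hx.2.2.1) (fun x hx hx' ↦ absurd hx' hx.2.2.2)
  have hPR {p x : V} (hp : p ∈ P) (hx : x ∈ R) : ¬ G.Adj p x := by
    obtain ⟨hpj, y, hvy, hpy⟩ := hPj p hp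
    exact h.not_adj_of_adj_of_not_adj_cycle hvc (hΔ p) (hPN hp) hvy hpy hpj hx.1 hx.2.1 hx.2.2.1
      hx.2.2.2
  refine colorable_of_isIndepSet_cover ![insert v {x | ¬ G.Adj v x ∧ G.Adj (c (j + 2)) x},
    {x | ¬ G.Adj v x ∧ G.Adj (c (j + 3)) x}, P ∪ R, G.neighborSet v \ P] ?_ ?_
  · intro i
    fin_cases i
    · exact (indep_common _).insert fun x hx _ ↦ ⟨hx.1, fun hxv ↦ hx.1 hxv.symm⟩
    · exact indep_common _
    · exact Set.pairwise_union.2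
        ⟨hP, hR, fun p hp x hx _ ↦ ⟨hPR hp hx, fun hxp ↦ hPR hp hx hxp.symm⟩⟩
    · exact hNP
  · intro x
    simp only [Fin.exists_fin_succ, Matrix.cons_val_zero, Matrix.cons_val_succ,
      Matrix.cons_val_fin_one, Set.mem_insert_iff, Set.mem_ofPred_eq, Set.mem_union, Set.mem_sdiff,
      mem_neighborSet, exists_const, R]
    tauto

end TwoK2Free

end Cycle

/-! ### Graphs without 4-cliques -/

lemma cliqueFree_induce_neighborSet {n : ℕ} (h : G.CliqueFree (n + 1)) (v : V) :
    (G.induce (G.neighborSet v)).CliqueFree n := by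
  have := CliqueFreeOn.of_succ G h.cliqueFreeOn (Set.mem_univ v)
  rwa [Set.univ_inter, ← cliqueFree_induce_iff] at this

lemma nonempty_iso_of_isIndContained {W : Type*} {H : SimpleGraph W} [Fintype V] [Fintype W]
    (hHG : H ⊴ G) (hcard : Fintype.card V ≤ Fintype.card W) : Nonempty (H ≃g G) := by
  obtain ⟨f⟩ := hHG
  exact ⟨RelIso.ofSurjective f (f.injective.bijective_of_nat_card_le (by simpa using hcard)).2⟩

namespace TwoK2Free

theorem exists_not_isIndContained_neighborSet [Nonempty V] [G.LocallyFinite] (h : TwoK2Free G)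
    (hΔ : ∀ x, G.degree x ≤ 5) : ∃ v, ¬ cycleGraph 5 ⊴ G.induce (G.neighborSet v) := by
  by_contra! hloc
  refine h.not_forall_neighborSet_iso_cycleGraph_five fun v ↦
    nonempty_iso_of_isIndContained (hloc v) ?_
  rw [card_neighborSet_eq_degree]
  exact hΔ v

theorem colorable_four_of_cliqueFree_four [G.LocallyFinite] (h : TwoK2Free G) (h₄ : G.CliqueFree 4)
    (hΔ : ∀ x, G.degree x ≤ 5) (hδ : ∀ x, 4 ≤ G.degree x) : G.Colorable 4 := by
  classical
  cases isEmpty_or_nonempty V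
  · exact .of_isEmpty 4
  obtain ⟨v, hv⟩ := h.exists_not_isIndContained_neighborSet hΔ
  by_cases hM₃ : (G.induce (G.neighborSet v)ᶜ).CliqueFree 3
  swap
  · obtain ⟨_, ht⟩ := not_forall_not.1 hM₃
    obtain ⟨a, b, c, hab, hac, hbc, -⟩ := is3Clique_iff.1 ht
    exact h.colorable_four_of_triangle_of_forall_not_adj h₄ hΔ (hδ v) hab hac hbc a.2 b.2 c.2
  by_cases hM₅ : cycleGraph 5 ⊴ G.induce (G.neighborSet v)ᶜ
  · obtain ⟨c⟩ := hM₅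
    exact h.colorable_four_of_cycle_of_forall_not_adj
      (c := (Embedding.induce _).comp c) (fun i ↦ (c i).2) h₄ hΔ hM₃
  · exact colorable_add_of_induce
      ((h.induce _).colorable_two (cliqueFree_induce_neighborSet h₄ v) hv)
      ((h.induce _).colorable_two hM₃ hM₅)

end TwoK2Free

/-! ### Graphs with a 4-clique -/

section FourClique

open Finset

lemma card_union_inter_union_add_le_sum_card {α : Type*} [DecidableEq α] (s t u v : Finset α) :
    #((s ∪ t) ∩ (u ∪ v)) + #((s ∪ u) ∩ (t ∪ v)) + #((s ∪ v) ∩ (t ∪ u)) ≤ #s + #t + #u + #v := by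
  have card_eq_sum {r : Finset α} (hr : r ⊆ s ∪ t ∪ (u ∪ v)) :
      #r = ∑ x ∈ s ∪ t ∪ (u ∪ v), if x ∈ r then 1 else 0 := by
    rw [← card_filter, filter_mem_eq_inter, inter_eq_right.2 hr]
  rw [card_eq_sum (r := s) (by grind), card_eq_sum (r := t) (by grind),
    card_eq_sum (r := u) (by grind), card_eq_sum (r := v) (by grind),
    card_eq_sum (r := (s ∪ t) ∩ (u ∪ v)) (by grind),
    card_eq_sum (r := (s ∪ u) ∩ (t ∪ v)) (by grind),
    card_eq_sum (r := (s ∪ v) ∩ (t ∪ u)) (by grind)]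
  simp only [← sum_add_distrib]
  refine sum_le_sum fun x _ ↦ ?_
  grind

lemma exists_subset_pair_of_card_le_two {α : Type*} [DecidableEq α] {W : Finset α} {P Q : α → Prop}
    (hW : #W ≤ 2) (hPQ : ∀ w ∈ W, P w ∨ Q w)
    (hboth : ∀ w ∈ W, ∀ w' ∈ W, w ≠ w' → P w ∧ Q w ∨ P w' ∧ Q w')
    (hP : ∃ s, P s) (hQ : ∃ t, Q t) : ∃ s t, P s ∧ Q t ∧ W ⊆ {s, t} := by
  obtain ⟨s, hs⟩ := hP
  obtain ⟨t, ht⟩ := hQ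
  interval_cases hcard : #W
  · rw [card_eq_zero] at hcard
    exact ⟨s, t, hs, ht, by simp [hcard]⟩
  · obtain ⟨w, rfl⟩ := card_eq_one.1 hcard
    rcases hPQ w (mem_singleton_self w) with hw | hw
    · exact ⟨w, t, hw, ht, by simp⟩
    · exact ⟨s, w, hs, hw, by simp⟩
  · obtain ⟨w, w', hne, rfl⟩ := card_eq_two.1 hcard
    grind

namespace TwoK2Free

lemma colorable_four_of_disjoint_edges (h : TwoK2Free G) {a b c d s t : V} (hab : G.Adj a b)
    (hcd : G.Adj c d) (hs : ¬ G.Adj a s ∨ ¬ G.Adj b s) (ht : ¬ G.Adj c t ∨ ¬ G.Adj d t)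
    (hcover : ∀ x, G.Adj a x ∨ G.Adj b x → G.Adj c x ∨ G.Adj d x →
      x = a ∨ x = b ∨ x = c ∨ x = d ∨ x = s ∨ x = t) : G.Colorable 4 := by
  wlog hbs : ¬ G.Adj b s generalizing a b
  · exact this hab.symm hs.symm (fun x hx ↦ by grind) (by tauto)
  wlog hdt : ¬ G.Adj d t generalizing c d
  · exact this hcd.symm ht.symm (fun x hx ↦ by grind) (by tauto)
  have isIndepSet {x y : V} (hxy : G.Adj x y) :
      G.IsIndepSet {z | ¬ G.Adj x z ∧ (G.Adj y z → z = x)} :=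
    h.isIndepSet_of_forall_not_adj hxy (fun z hz ↦ hz.1) fun z hz ↦ hz.2
  have isIndepSet_pair {x y : V} (hxy : ¬ G.Adj x y) : G.IsIndepSet {x, y} :=
    Set.pairwise_pair.2 fun _ ↦ ⟨hxy, fun hyx ↦ hxy hyx.symm⟩
  refine colorable_of_isIndepSet_cover ![{z | ¬ G.Adj a z ∧ (G.Adj b z → z = a)},
    {z | ¬ G.Adj c z ∧ (G.Adj d z → z = c)}, {b, s}, {d, t}] ?_ ?_
  · intro i
    fin_cases i
    exacts [isIndepSet hab, isIndepSet hcd, isIndepSet_pair hbs, isIndepSet_pair hdt]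
  · intro x
    simp only [Fin.exists_fin_succ, Matrix.cons_val_zero, Matrix.cons_val_succ,
      Matrix.cons_val_fin_one, Set.mem_insert_iff, Set.mem_ofPred_eq, Set.mem_singleton_iff,
      exists_const]
    grind [SimpleGraph.irrefl]

end TwoK2Free

variable {A : Finset V} {n : ℕ}

lemma not_adj_of_forall_ne_adj (h : G.CliqueFree (n + 1)) (hA : G.IsNClique n A) {m w : V}
    (hw : ∀ y ∈ A, y ≠ m → G.Adj w y) : ¬ G.Adj w m := by
  intro hwm
  obtain ⟨y, hy, hwy⟩ := hA.exists_not_adj_of_cliqueFree_succ h w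
  by_cases hym : y = m
  exacts [hwy (hym ▸ hwm), hwy (hw y hy hym)]

lemma not_adj_of_forall_ne_adj_of_forall_ne_adj (h : G.CliqueFree (n + 1)) (hA : G.IsNClique n A)
    {m w₁ w₂ : V} (hm : m ∈ A) (hw₁ : ∀ y ∈ A, y ≠ m → G.Adj w₁ y)
    (hw₂ : ∀ y ∈ A, y ≠ m → G.Adj w₂ y) (hw₁A : w₁ ∉ A) : ¬ G.Adj w₁ w₂ := by
  classical
  intro hadj
  obtain ⟨y, hy, hwy⟩ :=
    (hA.insert_erase (a := w₁) (by grind) hm).exists_not_adj_of_cliqueFree_succ h w₂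
  rcases mem_insert.1 hy with rfl | hy
  · exact hwy hadj.symm
  · exact hwy (hw₂ y (mem_of_mem_erase hy) (ne_of_mem_erase hy))

lemma eq_or_eq_of_adj_of_degree_le [G.LocallyFinite] (hA : G.IsNClique n A)
    {b w₁ w₂ x : V} (hb : b ∈ A) (hΔ : G.degree b ≤ n + 1) (hw : w₁ ≠ w₂)
    (hw₁A : w₁ ∉ A) (hw₂A : w₂ ∉ A) (hw₁ : G.Adj w₁ b) (hw₂ : G.Adj w₂ b) (hxA : x ∉ A)
    (hx : G.Adj b x) : x = w₁ ∨ x = w₂ := by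
  classical
  by_contra! hne
  have hsub : insert x (insert w₁ (insert w₂ (A.erase b))) ⊆ G.neighborFinset b := by
    intro y hy
    have := hA.isClique hb (y := y)
    grind [mem_neighborFinset, SimpleGraph.adj_comm]
  have hcard := (card_le_card hsub).trans (G.card_neighborFinset_eq_degree b ▸ hΔ)
  have := hA.card_eq
  grind

lemma card_neighborFinset_sdiff_add [G.LocallyFinite] [DecidableEq V] (hA : G.IsNClique n A)
    {x : V} (hx : x ∈ A) : #(G.neighborFinset x \ A) + n = G.degree x + 1 := by
  have hsub : A.erase x ⊆ G.neighborFinset x := fun y hy ↦ by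
    simpa using hA.isClique hx (mem_of_mem_erase hy) (ne_of_mem_erase hy).symm
  have hsdiff : G.neighborFinset x \ A = G.neighborFinset x \ A.erase x := by
    grind [SimpleGraph.irrefl, mem_neighborFinset]
  rw [hsdiff, ← hA.card_eq, ← card_erase_add_one hx, ← add_assoc, card_sdiff_add_card_eq_card hsub,
    card_neighborFinset_eq_degree]

namespace TwoK2Free

/- A clique vertex adjacent to both `w₁` and `w₂` has no other neighbours outside the clique. There
are two such clique vertices, so by `2K₂`-freeness everything else can share the colour of one of
them, while each `wᵢ` takes the colour of the clique vertex that it may miss. -/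
theorem colorable_four_of_not_subsingleton [G.LocallyFinite] (h : TwoK2Free G) (h₅ : G.CliqueFree 5)
    (hA : G.IsNClique 4 A) (hΔ : ∀ x, G.degree x ≤ 5)
    (hw : ¬ {w | w ∉ A ∧ ∃ m ∈ A, ∀ y ∈ A, y ≠ m → G.Adj w y}.Subsingleton) : G.Colorable 4 := by
  classical
  obtain ⟨w₁, ⟨hw₁A, m₁, hm₁, hw₁⟩, w₂, ⟨hw₂A, m₂, hm₂, hw₂⟩, hne⟩ := Set.not_subsingleton_iff.1 hw
  obtain ⟨b, hb, b', hb', hbb'⟩ := one_lt_card.1 <| show 1 < #(A \ {m₁, m₂}) by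
    have := le_card_sdiff {m₁, m₂} A
    have := card_le_two (a := m₁) (b := m₂)
    have := hA.card_eq
    lia
  simp only [mem_sdiff, mem_insert, mem_singleton, not_or] at hb hb'
  have not_adj {y x : V} (hy : y ∈ A ∧ y ≠ m₁ ∧ y ≠ m₂) (hx : x ∉ A ∧ x ≠ w₁ ∧ x ≠ w₂) :
      ¬ G.Adj y x := fun hyx ↦
    (eq_or_eq_of_adj_of_degree_le hA hy.1 (hΔ y) hne hw₁A hw₂A (hw₁ y hy.1 hy.2.1)
      (hw₂ y hy.1 hy.2.2) hx.1 hyx).elim hx.2.1 hx.2.2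
  have hrest : G.IsIndepSet {x | x = b ∨ x ∉ A ∧ x ≠ w₁ ∧ x ≠ w₂} := by
    refine h.isIndepSet_of_forall_not_adj (hA.isClique hb.1 hb'.1 hbb') ?_ ?_
    · rintro x (rfl | hx)
      exacts [G.irrefl, not_adj hb hx]
    · rintro x (rfl | hx) hadj
      exacts [rfl, absurd hadj (not_adj hb' hx)]
  have hm₁w₁ := not_adj_of_forall_ne_adj h₅ hA hw₁
  have hm₂w₂ := not_adj_of_forall_ne_adj h₅ hA hw₂
  have hw₁w₂ (hm : m₁ = m₂) : ¬ G.Adj w₁ w₂ :=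
    not_adj_of_forall_ne_adj_of_forall_ne_adj h₅ hA hm₁ hw₁ (hm ▸ hw₂) hw₁A
  let color (x : V) : A :=
    if hx : x ∈ A then ⟨x, hx⟩ else if x = w₁ then ⟨m₁, hm₁⟩ else if x = w₂ then ⟨m₂, hm₂⟩
    else ⟨b, hb.1⟩
  have color_ne {x y : V} (hxy : G.Adj x y) : color x ≠ color y := by
    have := @hrest x
    grind [SimpleGraph.adj_comm, SimpleGraph.irrefl]
  simpa [hA.card_eq] using (Coloring.mk color color_ne).colorable

theorem colorable_four_of_card_inter_le_two [G.LocallyFinite] [DecidableEq V] (h : TwoK2Free G)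
    (h₅ : G.CliqueFree 5) (hA : G.IsNClique 4 A) {a b c d : V} (habcd : A = {a, b, c, d})
    (hw : {w | w ∉ A ∧ ∃ m ∈ A, ∀ y ∈ A, y ≠ m → G.Adj w y}.Subsingleton)
    (hcard : #((G.neighborFinset a \ A ∪ G.neighborFinset b \ A) ∩
      (G.neighborFinset c \ A ∪ G.neighborFinset d \ A)) ≤ 2) : G.Colorable 4 := by
  have hab : G.Adj a b :=
    hA.isClique (by simp [habcd]) (by simp [habcd]) (by grind [hA.card_eq])
  have hcd : G.Adj c d :=
    hA.isClique (by simp [habcd]) (by simp [habcd]) (by grind [hA.card_eq])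
  have not_adj_or (w : V) :
      (¬ G.Adj a w ∨ ¬ G.Adj b w) ∨ ¬ G.Adj c w ∨ ¬ G.Adj d w := by
    have := hA.exists_not_adj_of_cliqueFree_succ h₅ w
    grind [SimpleGraph.adj_comm]
  have exists_forall_ne_adj {w : V}
      (hw : w ∈ (G.neighborFinset a \ A ∪ G.neighborFinset b \ A) ∩
        (G.neighborFinset c \ A ∪ G.neighborFinset d \ A))
      (hn : G.Adj a w ∧ G.Adj b w ∨ G.Adj c w ∧ G.Adj d w) :
      w ∉ A ∧ ∃ m ∈ A, ∀ y ∈ A, y ≠ m → G.Adj w y := by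
    simp only [mem_inter, mem_union, mem_sdiff, mem_neighborFinset, G.adj_comm _ w] at hw hn
    refine ⟨by tauto, ?_⟩
    simp only [habcd, mem_insert, mem_singleton, exists_eq_or_imp, exists_eq_left, forall_eq_or_imp,
      forall_eq]
    grind
  obtain ⟨s, t, hs, ht, hst⟩ := exists_subset_pair_of_card_le_two
    (P := fun x ↦ ¬ G.Adj a x ∨ ¬ G.Adj b x) (Q := fun x ↦ ¬ G.Adj c x ∨ ¬ G.Adj d x) hcard
    (fun w _ ↦ not_adj_or w)
    (fun w₁ hw₁ w₂ hw₂ hne ↦ by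
      by_contra! hn
      exact hne <| hw (exists_forall_ne_adj hw₁ (by tauto)) (exists_forall_ne_adj hw₂ (by tauto)))
    ⟨a, .inl G.irrefl⟩ ⟨c, .inl G.irrefl⟩
  refine h.colorable_four_of_disjoint_edges hab hcd hs ht fun x hx₁ hx₂ ↦ ?_
  have := @hst x
  grind [mem_neighborFinset]

theorem colorable_four_of_isNClique_four [G.LocallyFinite] (h : TwoK2Free G) (h₅ : G.CliqueFree 5)
    (hA : G.IsNClique 4 A) (hΔ : ∀ x, G.degree x ≤ 5) : G.Colorable 4 := by
  classical
  by_cases hw : {w | w ∉ A ∧ ∃ m ∈ A, ∀ y ∈ A, y ≠ m → G.Adj w y}.Subsingleton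
  swap
  · exact h.colorable_four_of_not_subsingleton h₅ hA hΔ hw
  have card_le {x : V} (hx : x ∈ A) : #(G.neighborFinset x \ A) ≤ 2 := by
    have := card_neighborFinset_sdiff_add hA hx
    have := hΔ x
    lia
  obtain ⟨a, b, c, d, -, -, -, -, -, -, habcd⟩ := card_eq_four.1 hA.card_eq
  have := card_le (x := a) (by grind)
  have := card_le (x := b) (by grind)
  have := card_le (x := c) (by grind)
  have := card_le (x := d) (by grind)
  have := card_union_inter_union_add_le_sum_card (G.neighborFinset a \ A) (G.neighborFinset b \ A)
    (G.neighborFinset c \ A) (G.neighborFinset d \ A)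
  by_contra hcol
  have h_ab := mt (h.colorable_four_of_card_inter_le_two h₅ hA habcd hw) hcol
  have h_ac := mt (h.colorable_four_of_card_inter_le_two h₅ hA (a := a) (b := c) (c := b) (d := d)
    (by grind) hw) hcol
  have h_ad := mt (h.colorable_four_of_card_inter_le_two h₅ hA (a := a) (b := d) (c := b) (d := c)
    (by grind) hw) hcol
  lia

end TwoK2Free

end FourClique

/-! ### Induced subgraphs of bounded degree -/

lemma degree_induce_le [G.LocallyFinite] (s : Set V) [(G.induce s).LocallyFinite] (v : s) :
    (G.induce s).degree v ≤ G.degree v :=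
  (Copy.induce G s).degree_le v

lemma degree_induce_lt [G.LocallyFinite] {s : Set V} [(G.induce s).LocallyFinite] {v : s} {w : V}
    (hw : w ∉ s) (hvw : G.Adj v w) : (G.induce s).degree v < G.degree v := by
  classical
  rw [← card_neighborFinset_eq_degree, ← card_neighborFinset_eq_degree,
    ← Finset.card_map (.subtype (· ∈ s))]
  refine Finset.card_lt_card <| Finset.ssubset_iff_of_subset (fun x hx ↦ ?_) |>.2
    ⟨w, (G.mem_neighborFinset v w).2 hvw, by simp [hw]⟩
  obtain ⟨y, hy, rfl⟩ := Finset.mem_map.1 hx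
  simpa using hy

theorem TwoK2Free.colorable_four [Finite V] [G.LocallyFinite] (h : TwoK2Free G)
    (hΔ : ∀ x, G.degree x ≤ 5) (h₅ : G.CliqueFree 5) : G.Colorable 4 := by
  refine colorable_of_forall_induce_le_degree fun s _ hδ ↦ ?_
  have hΔs (v : s) : (G.induce s).degree v ≤ 5 := (degree_induce_le s v).trans (hΔ v)
  by_cases h₄ : (G.induce s).CliqueFree 4
  · exact (h.induce s).colorable_four_of_cliqueFree_four h₄ hΔs hδ
  · obtain ⟨A, hA⟩ := not_forall_not.1 h₄
    exact (h.induce s).colorable_four_of_isNClique_four (h₅.comap ⟨Copy.induce G s⟩) hA hΔs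

/-! ### Maximum cliques -/

section MaximumCliques

open Finset

theorem TwoK2Free.not_disjoint_of_isNClique [G.LocallyFinite] {n : ℕ} (h : TwoK2Free G)
    (hn : 5 ≤ n) (hΔ : ∀ x, G.degree x ≤ n + 1) {A B : Finset V} (hA : G.IsNClique n A)
    (hB : G.IsNClique n B) : ¬ Disjoint A B := by
  classical
  intro hAB
  have hS {a : V} (ha : a ∈ A) : n ≤ #(B \ G.neighborFinset a) + 2 := by
    have heq : B \ G.neighborFinset a = B \ (G.neighborFinset a \ A) := by
      grind [Finset.disjoint_left]
    have := card_neighborFinset_sdiff_add hA ha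
    have := le_card_sdiff (G.neighborFinset a \ A) B
    have := hΔ a
    have := hB.card_eq
    lia
  have hSS {a a' : V} (ha : a ∈ A) (ha' : a' ∈ A) (hne : a ≠ a') :
      #((B \ G.neighborFinset a) ∩ (B \ G.neighborFinset a')) ≤ 1 := by
    refine card_le_one.2 fun x hx y hy ↦ ?_
    by_contra hxy
    simp only [mem_inter, mem_sdiff, mem_neighborFinset] at hx hy
    have := h.adj_or (hA.isClique ha ha' hne) (hB.isClique hx.1.1 hy.1.1 hxy)
    tauto
  obtain ⟨a, ha, b, hb, c, hc, hab, hac, hbc⟩ := two_lt_card.1 (show 2 < #A by grind [hA.card_eq])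
  have := hS ha
  have := hS hb
  have := hS hc
  have := hSS ha hb hab
  have := hSS ha hc hac
  have := hSS hb hc hbc
  have hunion : #(B \ G.neighborFinset a ∪ B \ G.neighborFinset b ∪ B \ G.neighborFinset c) ≤ n :=
    (card_le_card (by grind)).trans_eq hB.card_eq
  have hunion_inter := card_union_le ((B \ G.neighborFinset a) ∩ (B \ G.neighborFinset c))
    ((B \ G.neighborFinset b) ∩ (B \ G.neighborFinset c))
  rw [← union_inter_distrib_right] at hunion_inter
  grind

variable {n : ℕ} {𝓒 : Finset (Finset V)}

/- If `I` and `U` are the intersection and the union of the old cliques and `D` is the new one, then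
`I ∪ (D ∩ U)` is again a clique, so it has at most `#D` vertices. -/
theorem two_mul_le_card_inf'_add_card_sup' [DecidableEq V] (h : G.CliqueFree (n + 1))
    (h𝓒 : 𝓒.Nonempty) (hclique : ∀ C ∈ 𝓒, G.IsNClique n C) :
    2 * n ≤ #(𝓒.inf' h𝓒 id) + #(𝓒.sup' h𝓒 id) := by
  induction h𝓒 using Finset.Nonempty.cons_induction with
  | singleton C =>
    have := (hclique C (mem_singleton_self C)).card_eq
    simp only [inf'_singleton, sup'_singleton, id]
    lia
  | cons D 𝓒 hD h𝓒 ih =>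
    rw [inf'_cons h𝓒, sup'_cons h𝓒, id]
    specialize ih fun C hC ↦ hclique C (mem_cons_of_mem hC)
    have hIU : 𝓒.inf' h𝓒 id ⊆ 𝓒.sup' h𝓒 id := fun x hx ↦ by
      obtain ⟨C, hC⟩ := h𝓒
      exact (mem_sup' _).2 ⟨C, hC, (mem_inf' _).1 hx C hC⟩
    have hadj : ∀ x ∈ 𝓒.inf' h𝓒 id, ∀ y ∈ 𝓒.sup' h𝓒 id, x ≠ y → G.Adj x y := by
      simp only [mem_inf', mem_sup', id]
      rintro x hx y ⟨C, hC, hy⟩ hxy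
      exact (hclique C (mem_cons_of_mem hC)).isClique (hx C hC) hy hxy
    generalize 𝓒.inf' h𝓒 id = I, 𝓒.sup' h𝓒 id = U at *
    have hD := hclique D (mem_cons_self D 𝓒)
    have hID : G.IsClique (I ∪ D ∩ U : Finset V) := by
      intro x hx y hy hxy
      have := @hD.isClique x
      grind [SimpleGraph.adj_comm]
    have hIDn : #(I ∪ D ∩ U) ≤ n := by
      by_contra! hlt
      exact h.mono hlt _ ⟨hID, rfl⟩
    have hinter : I ∩ (D ∩ U) = D ∩ I := by grind
    have := card_union_add_card_inter I (D ∩ U)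
    have := card_union_add_card_inter D U
    have := hD.card_eq
    rw [hinter] at *
    simp only [inf_eq_inter, sup_eq_union]
    lia

lemma card_sup'_le_degree_add_one [DecidableEq V] [G.LocallyFinite] {v : V} (h𝓒 : 𝓒.Nonempty)
    (hclique : ∀ C ∈ 𝓒, G.IsNClique n C) (hv : ∀ C ∈ 𝓒, v ∈ C) :
    #(𝓒.sup' h𝓒 id) ≤ G.degree v + 1 := by
  rw [← card_neighborFinset_eq_degree]
  refine (card_le_card fun x hx ↦ ?_).trans (card_insert_le v (G.neighborFinset v))
  obtain ⟨C, hC, hxC⟩ := (mem_sup' h𝓒).1 hx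
  have := (hclique C hC).isClique (hv C hC) hxC
  grind [mem_neighborFinset]

lemma two_mul_le_card_inf'_add_degree_add_one [DecidableEq V] [G.LocallyFinite]
    (h : G.CliqueFree (n + 1)) {v : V} (h𝓒 : 𝓒.Nonempty)
    (hclique : ∀ C ∈ 𝓒, G.IsNClique n C) (hv : ∀ C ∈ 𝓒, v ∈ C) :
    2 * n ≤ #(𝓒.inf' h𝓒 id) + (G.degree v + 1) :=
  (two_mul_le_card_inf'_add_card_sup' h h𝓒 hclique).trans <|
    Nat.add_le_add_left (card_sup'_le_degree_add_one h𝓒 hclique hv) _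

theorem exists_forall_mem_of_pairwise_not_disjoint [G.LocallyFinite] {d : ℕ}
    (h : G.CliqueFree (n + 1)) (hΔ : ∀ x, G.degree x ≤ d) (hn : 2 * (d + 1) < 3 * n)
    (h𝓒 : 𝓒.Nonempty) (hclique : ∀ C ∈ 𝓒, G.IsNClique n C)
    (hmeet : ∀ C ∈ 𝓒, ∀ D ∈ 𝓒, ¬ Disjoint C D) : ∃ v, ∀ C ∈ 𝓒, v ∈ C := by
  classical
  induction h𝓒 using Finset.Nonempty.cons_induction with
  | singleton C =>
    simp only [mem_singleton, forall_eq] at hmeet ⊢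
    exact (not_disjoint_iff.1 hmeet).imp fun _ ↦ And.left
  | cons D 𝓒 hD h𝓒 ih =>
    simp only [forall_mem_cons] at hclique hmeet ⊢
    obtain ⟨v, hv⟩ := ih hclique.2 fun C hC ↦ (hmeet.2 C hC).2
    have hinf := two_mul_le_card_inf'_add_degree_add_one h h𝓒 hclique.2 hv
    obtain ⟨C, hC⟩ := h𝓒
    obtain ⟨w, hwD, hwC⟩ := not_disjoint_iff.1 (hmeet.1.2 C hC)
    have hDC := two_mul_le_card_inf'_add_degree_add_one h (v := w) (insert_nonempty D {C})
      (by simp [hclique.1, hclique.2 C hC]) (by simp [hwD, hwC])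
    simp only [inf'_insert (singleton_nonempty C), inf'_singleton, id, inf_eq_inter] at hDC
    have hinfC : 𝓒.inf' ⟨C, hC⟩ id ⊆ C := inf'_le id hC
    obtain ⟨x, hx⟩ := inter_nonempty_of_card_lt_card_add_card hinfC inter_subset_right (by
      have := hΔ v
      have := hΔ w
      have := (hclique.2 C hC).card_eq
      lia : #C < #(𝓒.inf' ⟨C, hC⟩ id) + #(D ∩ C))
    rw [mem_inter, mem_inter] at hx
    exact ⟨x, hx.2.1, (mem_inf' ⟨C, hC⟩).1 hx.1⟩

theorem TwoK2Free.exists_forall_isNClique_mem [Finite V] [Nonempty V] [G.LocallyFinite] {n : ℕ}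
    (h : TwoK2Free G) (hn : 5 ≤ n) (hΔ : ∀ x, G.degree x ≤ n + 1) (hω : G.CliqueFree (n + 1)) :
    ∃ v, ∀ C, G.IsNClique n C → v ∈ C := by
  classical
  have := Fintype.ofFinite V
  obtain h𝓒 | h𝓒 := (G.cliqueFinset n).eq_empty_or_nonempty
  · exact ⟨Classical.arbitrary V, fun C hC ↦ absurd hC (cliqueFinset_eq_empty_iff.1 h𝓒 C)⟩
  · simpa only [mem_cliqueFinset_iff] using exists_forall_mem_of_pairwise_not_disjoint hω hΔ
      (by lia) h𝓒 (fun C ↦ (mem_cliqueFinset_iff).1) fun C hC D hD ↦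
        h.not_disjoint_of_isNClique hn hΔ (mem_cliqueFinset_iff.1 hC) (mem_cliqueFinset_iff.1 hD)

end MaximumCliques

theorem TwoK2Free.colorable_of_cliqueFree [Finite V] [G.LocallyFinite] {n : ℕ} (h : TwoK2Free G)
    (hn : 4 ≤ n) (hΔ : ∀ x, G.degree x ≤ n + 1) (hω : G.CliqueFree (n + 1)) : G.Colorable n := by
  classical
  induction n, hn using Nat.le_induction generalizing V with
  | base => exact h.colorable_four hΔ hω
  | succ n hn ih =>
    cases isEmpty_or_nonempty V
    · exact .of_isEmpty _
    obtain ⟨v, hv⟩ := h.exists_forall_isNClique_mem (by lia) hΔ hω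
    obtain ⟨s, hvs, -, hs, hmax⟩ := exists_maximal_isIndepSet (G := G) (Set.pairwise_singleton v _)
      (Set.subset_univ {v})
    let _ : (G.induce sᶜ).LocallyFinite := fun _ ↦ Fintype.ofFinite _
    refine colorable_succ_of_induce_compl hs (ih (h.induce _) (fun x ↦ ?_) ?_)
    · obtain ⟨y, hy, hxy⟩ := hmax x trivial x.2
      exact Nat.le_of_lt_succ <| (degree_induce_lt (by simpa) hxy).trans_le (hΔ x)
    · rw [cliqueFree_induce_iff]
      exact fun C hCs hC ↦ hCs (hv C hC) (hvs rfl)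

end

theorem twoK2Free_chromatic_le_max_of_five_le_maxDegree
    {V : Type*} [Fintype V] (G : SimpleGraph V) [DecidableRel G.Adj]
    (hfree : TwoK2Free G) (hΔ : 5 ≤ G.maxDegree) :
    G.chromaticNumber ≤ (max (G.maxDegree - 1) G.cliqueNum : ℕ) := by
  refine (hfree.colorable_of_cliqueFree (by lia) (fun v ↦ ?_) fun C hC ↦ ?_).chromaticNumber_le
  · have := G.degree_le_maxDegree v
    lia
  · have := hC.isClique.card_le_cliqueNum
    grind [hC.card_eq]
end

section
/- The Borodin–Kostochka conjecture holds for 2K2-free graphs: if G is a finite simple 2K2-free graph with maximum degree Δ(G) ≥ 9, then χ(G) ≤ max{ω(G), Δ(G) − 1}. -/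
/-!
Adding one vertex at a time, consider a graph that is not `n`-colourable, where `n + 1` bounds the
degrees, with an `(n + 1)`-colouring in which the colour of `v` is used only at `v`. Every colour
other than its own is present at `v`, and since at most one neighbour is redundant, at most one
colour occurs there more than once. If `x` is the only neighbour of `v` of its colour, the colours
of `v` and `x` can be exchanged, so the same holds at `x`.

Two nonadjacent such neighbours `x` and `y` span, with `v` and two vertices of their colours, a
five-cycle, which degree counting and `2K₂`-freeness exclude. So `v` and its unique neighbours form
a clique `K`, which has a vertex of every colour except one, `d`, as there is no clique on `n + 1`
vertices. The vertices outside `K` of other colours than `d` turn out to be independent. They can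
take the colour of a vertex `κ` of `K` without neighbours among them, and each vertex of colour `d`
that of a non-neighbour in `K` other than `κ`. A suitable `κ` exists, which frees the colour `d`.
-/

section

variable {V : Type*} {G : SimpleGraph V}

theorem TwoK2Free.adj_or_s1 {a b c d : V} (hfree : TwoK2Free G) (hab : G.Adj a b)
    (hcd : G.Adj c d) : G.Adj a c ∨ G.Adj a d ∨ G.Adj b c ∨ G.Adj b d := by
  by_contra! h
  obtain ⟨hac, had, hbc, hbd⟩ := h
  refine hfree ⟨a, b, c, d, hab.ne, ?_, ?_, ?_, ?_, hcd.ne, hab, hcd, hac, had, hbc, hbd⟩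
  · exact fun h ↦ had (h ▸ hcd)
  · exact fun h ↦ hac (h ▸ hcd.symm)
  · exact fun h ↦ hac (h ▸ hab)
  · exact fun h ↦ had (h ▸ hab)

theorem spanningCoe_induce_adj {s : Set V} {a b : V} :
    (G.induce s).spanningCoe.Adj a b ↔ a ∈ s ∧ b ∈ s ∧ G.Adj a b := by
  simp only [SimpleGraph.map_adj, SimpleGraph.comap_adj, Function.Embedding.subtype_apply,
    Subtype.exists]
  grind

theorem TwoK2Free.spanningCoe_induce (hfree : TwoK2Free G) (s : Set V) :
    TwoK2Free (G.induce s).spanningCoe := by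
  rintro ⟨a, b, c, d, hab, hac, had, hbc, hbd, hcd, h⟩
  simp only [spanningCoe_induce_adj] at h
  obtain ⟨⟨ha, hb, eab⟩, ⟨hc, hd, ecd⟩, nac, nad, nbc, nbd⟩ := h
  exact hfree ⟨a, b, c, d, hab, hac, had, hbc, hbd, hcd, eab, ecd, fun h ↦ nac ⟨ha, hc, h⟩,
    fun h ↦ nad ⟨ha, hd, h⟩, fun h ↦ nbc ⟨hb, hc, h⟩, fun h ↦ nbd ⟨hb, hd, h⟩⟩

theorem exists_notMem_of_card_le {n : ℕ} {s : Finset (Fin (n + 1))} (hs : s.card ≤ n) :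
    ∃ c, c ∉ s := by
  have := Finset.exists_mem_notMem_of_card_lt_card (s := s) (t := Finset.univ) (by simpa using hs)
  simpa using this

theorem colorable_of_forall_ne {n : ℕ} (φ : G.Coloring (Fin (n + 1))) {c : Fin (n + 1)}
    (hc : ∀ x, φ x ≠ c) : G.Colorable n := by
  let ψ : G.Coloring {i // i ≠ c} :=
    .mk (fun x ↦ ⟨φ x, hc x⟩) fun h heq ↦ φ.valid h (congrArg Subtype.val heq)
  simpa using ψ.colorable

variable {α : Type*} {φ : V → α} {c : α} {v x : V}

/-- `v` is the only vertex of its colour. -/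
def IsSolo (φ : V → α) (v : V) : Prop :=
  ∀ x, φ x = φ v → x = v

/-- `x` is the only neighbour of `v` with the colour of `x`. -/
def IsUniqueNbr (G : SimpleGraph V) (φ : V → α) (v x : V) : Prop :=
  G.Adj v x ∧ ∀ y, G.Adj v y → φ y = φ x → y = x

/-- `x` has two neighbours of colour `c`. -/
def SeesTwice (G : SimpleGraph V) (φ : V → α) (x : V) (c : α) : Prop :=
  ∃ y z, y ≠ z ∧ G.Adj x y ∧ G.Adj x z ∧ φ y = c ∧ φ z = c

/-- `x` has neighbours of every colour other than its own, i.e. it cannot be recoloured alone. -/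
def SeesAll (G : SimpleGraph V) (φ : V → α) (x : V) : Prop :=
  ∀ c ≠ φ x, ∃ y, G.Adj x y ∧ φ y = c

theorem IsUniqueNbr.adj (hx : IsUniqueNbr G φ v x) : G.Adj v x := hx.1

theorem IsUniqueNbr.eq {y : V} (hx : IsUniqueNbr G φ v x) (hy : G.Adj v y) (h : φ y = φ x) :
    y = x :=
  hx.2 y hy h

theorem isUniqueNbr_of_not_seesTwice (hx : G.Adj v x) (h : ¬ SeesTwice G φ v (φ x)) :
    IsUniqueNbr G φ v x :=
  ⟨hx, fun y hy hyx ↦ by_contra fun hne ↦ h ⟨y, x, hne, hy, hx, hyx, rfl⟩⟩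

namespace SeesAll

theorem exists_isUniqueNbr (hx : SeesAll G φ x) (hc : c ≠ φ x) (h : ¬ SeesTwice G φ x c) :
    ∃ y, IsUniqueNbr G φ x y ∧ φ y = c := by
  obtain ⟨y, hy, rfl⟩ := hx c hc
  exact ⟨y, isUniqueNbr_of_not_seesTwice hy h, rfl⟩

variable {n : ℕ} {φ : V → Fin (n + 1)} [Fintype (G.neighborSet x)]

/-- Since `x` has at most `n + 1` neighbours and sees `n` colours, at most one
neighbour is redundant. -/
theorem card_le {s : Finset V} {t : Finset (Fin (n + 1))} (hx : SeesAll G φ x)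
    (hdeg : G.degree x ≤ n + 1) (hs : ∀ y ∈ s, G.Adj x y) (ht : ∀ y ∈ s, φ y ∈ t) :
    s.card ≤ t.card + 1 := by
  classical
  have hsub : s ⊆ G.neighborFinset x := fun y hy ↦ (G.mem_neighborFinset x y).2 (hs y hy)
  have hcover : Finset.univ.erase (φ x) ⊆ t ∪ (G.neighborFinset x \ s).image φ := by
    intro c hc
    obtain ⟨y, hy, rfl⟩ := hx c (Finset.ne_of_mem_erase hc)
    by_cases hys : y ∈ s
    · exact Finset.mem_union_left _ (ht y hys)
    · exact Finset.mem_union_right _ <| Finset.mem_image_of_mem φ <|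
        Finset.mem_sdiff.2 ⟨(G.mem_neighborFinset x y).2 hy, hys⟩
  have hcard := (Finset.card_le_card hcover).trans (Finset.card_union_le _ _)
  have himage := Finset.card_image_le (s := G.neighborFinset x \ s) (f := φ)
  have hsdiff := Finset.card_sdiff_add_card_eq_card hsub
  rw [Finset.card_erase_of_mem (Finset.mem_univ _), Finset.card_fin] at hcard
  rw [G.card_neighborFinset_eq_degree] at hsdiff
  omega

theorem eq_of_seesTwice {c d : Fin (n + 1)} (hx : SeesAll G φ x) (hdeg : G.degree x ≤ n + 1)
    (hc : SeesTwice G φ x c) (hd : SeesTwice G φ x d) : c = d := by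
  classical
  obtain ⟨y, z, hyz, hy, hz, rfl, hzy⟩ := hc
  obtain ⟨y', z', hyz', hy', hz', rfl, hzy'⟩ := hd
  by_contra hne
  have hle := hx.card_le hdeg (s := {y, z, y', z'}) (t := {φ y, φ y'})
    (by simp [hy, hz, hy', hz']) (by simp [hzy, hzy'])
  have hcard : ({y, z, y', z'} : Finset V).card = 4 := by
    rw [Finset.card_eq_succ]
    exact ⟨y, {z, y', z'}, by grind, rfl, Finset.card_eq_three.2 ⟨z, y', z', by grind⟩⟩
  rw [hcard, Finset.card_pair hne] at hle
  omega

theorem false_of_three_nbrs {y z w : V} (hx : SeesAll G φ x) (hdeg : G.degree x ≤ n + 1)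
    (hy : G.Adj x y) (hz : G.Adj x z) (hw : G.Adj x w) (hyz : y ≠ z) (hyw : y ≠ w) (hzw : z ≠ w)
    (hφz : φ z = φ y) (hφw : φ w = φ y) : False := by
  classical
  have hle := hx.card_le hdeg (s := {y, z, w}) (t := {φ y})
    (by simp [hy, hz, hw]) (by simp [hφz, hφw])
  rw [Finset.card_eq_three.2 ⟨y, z, w, hyz, hyw, hzw, rfl⟩, Finset.card_singleton] at hle
  omega

theorem exists_forall_seesTwice_eq (hx : SeesAll G φ x) (hdeg : G.degree x ≤ n + 1) :
    ∃ e, ∀ c, SeesTwice G φ x c → c = e := by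
  by_cases h : ∃ e, SeesTwice G φ x e
  · obtain ⟨e, he⟩ := h
    exact ⟨e, fun c hc ↦ hx.eq_of_seesTwice hdeg hc he⟩
  · exact ⟨0, fun c hc ↦ (h ⟨c, hc⟩).elim⟩

end SeesAll

theorem IsSolo.seesAll {n : ℕ} {φ : G.Coloring (Fin (n + 1))} (hv : IsSolo φ v)
    (hcol : ¬ G.Colorable n) : SeesAll G φ v := by
  classical
  by_contra h
  simp only [SeesAll, not_forall, not_exists, not_and] at h
  obtain ⟨c, hc, hnbr⟩ := h
  let ψ : G.Coloring (Fin (n + 1)) := .mk (Function.update φ v c) fun {y z} hyz ↦ by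
    have := φ.valid hyz
    simp only [Function.update_apply]
    grind [hyz.ne, hyz.symm]
  refine hcol (colorable_of_forall_ne ψ (c := φ v) fun y ↦ ?_)
  change Function.update φ v c y ≠ φ v
  rw [Function.update_apply]
  split_ifs with hy
  · exact hc
  · exact fun h ↦ hy (hv y h)

section Swap

variable {φ : G.Coloring α}

/-- The colouring obtained from `φ` by exchanging the colours of `v` and `x`. -/
def IsUniqueNbr.swap [DecidableEq V] (hx : IsUniqueNbr G φ v x) (hv : IsSolo φ v) :
    G.Coloring α :=
  .mk (φ ∘ Equiv.swap v x) fun {y z} hyz heq ↦ by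
    have hx' : ∀ {w}, G.Adj v w → w ≠ x → φ w ≠ φ x := fun hw hne h ↦ hne (hx.eq hw h)
    have hv' : ∀ w, w ≠ v → φ w ≠ φ v := fun w hne h ↦ hne (hv w h)
    have := φ.valid hyz
    have := hyz.symm
    simp only [Function.comp_apply, Equiv.swap_apply_def] at heq
    grind

variable [DecidableEq V] (hx : IsUniqueNbr G φ v x) (hv : IsSolo φ v)

theorem IsUniqueNbr.coe_swap : ⇑(hx.swap hv) = φ ∘ Equiv.swap v x := rfl

theorem IsUniqueNbr.swap_left : hx.swap hv v = φ x := by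
  simp [coe_swap]

theorem IsUniqueNbr.swap_right : hx.swap hv x = φ v := by
  simp [coe_swap]

theorem IsUniqueNbr.swap_of_ne {z : V} (hzv : z ≠ v) (hzx : z ≠ x) : hx.swap hv z = φ z := by
  simp [coe_swap, Equiv.swap_apply_of_ne_of_ne hzv hzx]

theorem IsUniqueNbr.isSolo_swap : IsSolo (hx.swap hv) x := by
  intro z hz
  have hsolo := hv (Equiv.swap v x z) (by simpa [coe_swap] using hz)
  rwa [Equiv.swap_apply_eq_iff, Equiv.swap_apply_left] at hsolo

theorem IsUniqueNbr.isUniqueNbr_swap_self : IsUniqueNbr G (hx.swap hv) x v := by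
  refine ⟨hx.adj.symm, fun y hy hyv ↦ ?_⟩
  by_contra hne
  rw [swap_left, swap_of_ne hx hv hne hy.ne'] at hyv
  exact φ.valid hy hyv.symm

theorem IsUniqueNbr.isUniqueNbr_swap {p : V} (hp : IsUniqueNbr G φ x p) (hpv : p ≠ v) :
    IsUniqueNbr G (hx.swap hv) x p := by
  refine ⟨hp.adj, fun y hy hyp ↦ ?_⟩
  rw [hx.swap_of_ne hv hpv hp.adj.ne'] at hyp
  rcases eq_or_ne y v with rfl | hyv
  · rw [swap_left] at hyp
    exact (φ.valid hp.adj hyp).elim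
  · rw [hx.swap_of_ne hv hyv hy.ne'] at hyp
    exact hp.eq hy hyp

end Swap

/-- Each unique neighbour of the solo vertex could itself be made solo, hence sees all colours. -/
theorem IsUniqueNbr.seesAll {n : ℕ} {φ : G.Coloring (Fin (n + 1))}
    (hx : IsUniqueNbr G φ v x) (hv : IsSolo φ v) (hcol : ¬ G.Colorable n) : SeesAll G φ x := by
  classical
  intro c hc
  rcases eq_or_ne c (φ v) with rfl | hcv
  · exact ⟨v, hx.adj.symm, rfl⟩
  have hsolo : IsSolo (hx.swap hv) x := hx.isSolo_swap hv
  obtain ⟨y, hy, hyc⟩ := hsolo.seesAll hcol c (by rwa [swap_right])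
  rcases eq_or_ne y v with rfl | hyv
  · exact (hc (by rw [← hyc, swap_left])).elim
  · exact ⟨y, hy, by rw [← hyc, hx.swap_of_ne hv hyv hy.ne']⟩

theorem IsUniqueNbr.exists_adj_adj {n : ℕ} {φ : G.Coloring (Fin (n + 1))} {c d : Fin (n + 1)}
    (hx : IsUniqueNbr G φ v x) (hv : IsSolo φ v) (hcol : ¬ G.Colorable n) (hcv : c ≠ φ v)
    (hcx : c ≠ φ x) (hdv : d ≠ φ v) (hcd : c ≠ d) :
    ∃ y z, G.Adj x y ∧ G.Adj y z ∧ φ y = c ∧ φ z = d := by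
  classical
  by_contra! h
  -- Otherwise recolouring with `d` the neighbours of `x` of colour `c` hides `c` from `x`.
  let f : V → Fin (n + 1) := fun z ↦ if G.Adj x z ∧ φ z = c then d else φ z
  let ψ : G.Coloring (Fin (n + 1)) := .mk f fun {p q} hpq ↦ by
    have hvalid := φ.valid hpq
    have hp := h p q
    have hq := h q p
    have hqp := hpq.symm
    grind
  have hψ : ∀ z, ψ z = if G.Adj x z ∧ φ z = c then d else φ z := fun _ ↦ rfl
  have hψv : ψ v = φ v := by simp [hψ, hcv.symm]
  have hψx : ψ x = φ x := by simp [hψ]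
  have hsolo : IsSolo ψ v := fun z hz ↦ hv z (by grind)
  have hunique : IsUniqueNbr G ψ v x := ⟨hx.adj, fun z hz hzx ↦ hx.eq hz (by grind)⟩
  obtain ⟨z, hxz, hzc⟩ := hunique.seesAll hsolo hcol c (hψx ▸ hcx)
  grind

variable {n : ℕ} {y a : V}

/-- A five-cycle `v x b a y` as in the proof that nonadjacent unique neighbours `x`, `y` of a solo
vertex `v` are impossible, with the colouring normalised so that `x` and `a` form a colour class.
The vertex `b`, any neighbour of `x` coloured like `y`, is not part of the data. -/
structure PentagonConfig (G : SimpleGraph V) (φ : V → α) (v x y a : V) : Prop where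
  isSolo : IsSolo φ v
  isUniqueNbr_left : IsUniqueNbr G φ v x
  isUniqueNbr_right : IsUniqueNbr G φ v y
  not_adj : ¬ G.Adj x y
  adj : G.Adj y a
  color_eq_left_iff : ∀ z, φ z = φ x ↔ z = x ∨ z = a

theorem TwoK2Free.color_ne_of_adj {φ : G.Coloring α} {p q : V} (hfree : TwoK2Free G)
    (hx : IsUniqueNbr G φ v x) (hy : IsUniqueNbr G φ v y) (hpx : φ p = φ x) (hne : p ≠ x)
    (hpy : ¬ G.Adj p y) (hpq : G.Adj p q) : φ q ≠ φ y := by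
  intro hqy
  rcases hfree.adj_or_s1 hpq hy.adj with h | h | h | h
  · exact hne (hx.eq h.symm hpx)
  · exact hpy h
  · exact hpy (hy.eq h.symm hqy ▸ hpq)
  · exact φ.valid h hqy

/-- Every vertex of the colour of `x` that is not adjacent to `y` can be recoloured like `y`, except
for `x` itself. This leaves `x` and the only neighbour `a` of `y` of that colour. -/
theorem TwoK2Free.exists_pentagonConfig {φ : G.Coloring (Fin (n + 1))} (hfree : TwoK2Free G)
    (hcol : ¬ G.Colorable n) (hv : IsSolo φ v) (hx : IsUniqueNbr G φ v x)
    (hy : IsUniqueNbr G φ v y) (hne : x ≠ y) (hxy : ¬ G.Adj x y)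
    (htwice : ¬ SeesTwice G φ y (φ x)) :
    ∃ (ψ : G.Coloring (Fin (n + 1))) (a : V), PentagonConfig G ψ v x y a := by
  classical
  have hφxy : φ x ≠ φ y := fun h ↦ hne (hy.eq hx.adj h)
  obtain ⟨a, ha, hax⟩ := (hy.seesAll hv hcol).exists_isUniqueNbr hφxy htwice
  let f : V → Fin (n + 1) := fun z ↦ if φ z = φ x ∧ z ≠ x ∧ z ≠ a then φ y else φ z
  have hmove {p q : V} (hpq : G.Adj p q) (hpx : φ p = φ x) (hne : p ≠ x) (hpa : p ≠ a) :
      φ q ≠ φ y :=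
    hfree.color_ne_of_adj hx hy hpx hne (fun h ↦ hpa (ha.eq h.symm (hpx.trans hax.symm))) hpq
  have hf {p q : V} (hpq : G.Adj p q) : f p ≠ f q := by
    have hvalid := φ.valid hpq
    have hp := hmove hpq
    have hq := hmove hpq.symm
    grind
  have hφvx : φ v ≠ φ x := φ.valid hx.adj
  have hφvy : φ v ≠ φ y := φ.valid hy.adj
  refine ⟨.mk f hf, a, ?_, ⟨hx.adj, ?_⟩, ⟨hy.adj, ?_⟩, hxy, ha.adj, ?_⟩
  · intro z (hz : f z = f v)
    exact hv z (by grind)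
  · intro z hvz (hz : f z = f x)
    exact hx.eq hvz (by grind)
  · intro z hvz (hz : f z = f y)
    have hzx : φ z = φ x → z = x := hx.eq hvz
    exact hy.eq hvz (by grind)
  · intro z
    change f z = f x ↔ _
    grind

namespace PentagonConfig

variable {φ : G.Coloring (Fin (n + 1))}

theorem color_eq_left (P : PentagonConfig G φ v x y a) : φ a = φ x :=
  (P.color_eq_left_iff a).2 (.inr rfl)

theorem color_left_ne_right (P : PentagonConfig G φ v x y a) : φ x ≠ φ y :=
  fun h ↦ φ.valid P.adj (h.symm.trans P.color_eq_left.symm)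

theorem far_ne_left (P : PentagonConfig G φ v x y a) : a ≠ x :=
  fun h ↦ P.not_adj (h ▸ P.adj.symm)

theorem not_adj_far (P : PentagonConfig G φ v x y a) : ¬ G.Adj v a :=
  fun h ↦ P.far_ne_left (P.isUniqueNbr_left.eq h P.color_eq_left)

theorem far_ne_solo (P : PentagonConfig G φ v x y a) : a ≠ v :=
  fun h ↦ φ.valid P.isUniqueNbr_left.adj (h ▸ P.color_eq_left)

theorem isUniqueNbr_far (P : PentagonConfig G φ v x y a) : IsUniqueNbr G φ y a := by
  refine ⟨P.adj, fun z hz hza ↦ ?_⟩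
  rcases (P.color_eq_left_iff z).1 (hza.trans P.color_eq_left) with rfl | rfl
  · exact (P.not_adj hz.symm).elim
  · rfl

theorem exists_forall_isUniqueNbr_far [Fintype (G.neighborSet a)]
    (P : PentagonConfig G φ v x y a) (hdeg : G.degree a ≤ n + 1) (hcol : ¬ G.Colorable n) :
    ∃ e, ∀ c, c ≠ φ v → c ≠ φ x → c ≠ φ y → c ≠ e → ∃ p, IsUniqueNbr G φ a p ∧ φ p = c := by
  classical
  have hy := P.isUniqueNbr_right
  let ψ := hy.swap P.isSolo
  have hψv : ψ v = φ y := hy.swap_left P.isSolo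
  have hψy : ψ y = φ v := hy.swap_right P.isSolo
  have hψ : ∀ z, z ≠ v → z ≠ y → ψ z = φ z := fun _ ↦ hy.swap_of_ne P.isSolo
  have ha : IsUniqueNbr G ψ y a := hy.isUniqueNbr_swap P.isSolo P.isUniqueNbr_far P.far_ne_solo
  have hψa : ψ a = φ x := (hψ a P.far_ne_solo P.adj.ne').trans P.color_eq_left
  have hsees : SeesAll G ψ a := ha.seesAll (hy.isSolo_swap P.isSolo) hcol
  obtain ⟨e, he⟩ := hsees.exists_forall_seesTwice_eq hdeg
  refine ⟨e, fun c hcv hcx hcy hce ↦ ?_⟩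
  have hiff : ∀ z, ψ z = c ↔ φ z = c := by
    intro z
    rcases eq_or_ne z v with rfl | hzv
    · simp [hψv, hcv.symm, hcy.symm]
    rcases eq_or_ne z y with rfl | hzy
    · simp [hψy, hcv.symm, hcy.symm]
    rw [hψ z hzv hzy]
  obtain ⟨p, hp, rfl⟩ := hsees.exists_isUniqueNbr (hψa ▸ hcx) fun h ↦ hce (he c h)
  have hφp : φ p = ψ p := (hiff p).1 rfl
  exact ⟨p, ⟨hp.adj, fun z hz hzp ↦ hp.eq hz ((hiff z).2 (hzp.trans hφp))⟩, hφp⟩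

theorem exists_isUniqueNbr_same_color [G.LocallyFinite] (P : PentagonConfig G φ v x y a)
    (hn : 7 ≤ n) (hdeg : ∀ t, G.degree t ≤ n + 1) (hcol : ¬ G.Colorable n) :
    ∃ c pv px py pa, IsUniqueNbr G φ v pv ∧ IsUniqueNbr G φ x px ∧ IsUniqueNbr G φ y py ∧
      IsUniqueNbr G φ a pa ∧ φ pv = c ∧ φ px = c ∧ φ py = c ∧ φ pa = c := by
  have hv := P.isSolo.seesAll hcol
  have hx := P.isUniqueNbr_left.seesAll P.isSolo hcol
  have hy := P.isUniqueNbr_right.seesAll P.isSolo hcol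
  obtain ⟨ev, hev⟩ := hv.exists_forall_seesTwice_eq (hdeg v)
  obtain ⟨ex, hex⟩ := hx.exists_forall_seesTwice_eq (hdeg x)
  obtain ⟨ey, hey⟩ := hy.exists_forall_seesTwice_eq (hdeg y)
  obtain ⟨ea, hea⟩ := P.exists_forall_isUniqueNbr_far (hdeg a) hcol
  obtain ⟨c, hc⟩ := exists_notMem_of_card_le (s := {φ v, φ x, φ y, ev, ex, ey, ea})
    ((Finset.card_insert_le _ _).trans ((Nat.succ_le_succ Finset.card_le_six).trans hn))
  simp only [Finset.mem_insert, Finset.mem_singleton, not_or] at hc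
  obtain ⟨hcv, hcx, hcy, hcev, hcex, hcey, hcea⟩ := hc
  obtain ⟨pv, hpv, hpvc⟩ := hv.exists_isUniqueNbr hcv fun h ↦ hcev (hev c h)
  obtain ⟨px, hpx, hpxc⟩ := hx.exists_isUniqueNbr hcx fun h ↦ hcex (hex c h)
  obtain ⟨py, hpy, hpyc⟩ := hy.exists_isUniqueNbr hcy fun h ↦ hcey (hey c h)
  obtain ⟨pa, hpa, hpac⟩ := hea c hcv hcx hcy hcea
  exact ⟨c, pv, px, py, pa, hpv, hpx, hpy, hpa, hpvc, hpxc, hpyc, hpac⟩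

theorem adj_or_of_isUniqueNbr_solo {p : V} (P : PentagonConfig G φ v x y a)
    (hcol : ¬ G.Colorable n) (hp : IsUniqueNbr G φ v p) (hpx : φ p ≠ φ x) :
    G.Adj p x ∨ G.Adj p a := by
  obtain ⟨z, hz, hzx⟩ := hp.seesAll P.isSolo hcol _ hpx.symm
  rcases (P.color_eq_left_iff z).1 hzx with rfl | rfl
  · exact .inl hz
  · exact .inr hz

theorem adj_or_of_isUniqueNbr_left {p : V} (P : PentagonConfig G φ v x y a)
    (hcol : ¬ G.Colorable n) (hp : IsUniqueNbr G φ x p) (hpv : p ≠ v) :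
    G.Adj p v ∨ G.Adj p a := by
  classical
  have hx := P.isUniqueNbr_left
  let ψ := hx.swap P.isSolo
  have hψp : ψ p = φ p := hx.swap_of_ne P.isSolo hpv hp.adj.ne'
  have hψx : ψ x = φ v := hx.swap_right P.isSolo
  obtain ⟨z, hz, hzx⟩ := (hx.isUniqueNbr_swap P.isSolo hp hpv).seesAll
    (hx.isSolo_swap P.isSolo) hcol (φ x) (hψp.symm ▸ φ.valid hp.adj)
  rcases eq_or_ne z v with rfl | hzv
  · exact .inl hz
  rcases eq_or_ne z x with rfl | hzne
  · exact (φ.valid P.isUniqueNbr_left.adj (hψx.symm.trans hzx)).elim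
  rw [hx.swap_of_ne P.isSolo hzv hzne] at hzx
  exact .inr (((P.color_eq_left_iff z).1 hzx).resolve_left hzne ▸ hz)

theorem adj_or_of_isUniqueNbr_right {p : V} (P : PentagonConfig G φ v x y a)
    (hcol : ¬ G.Colorable n) (hp : IsUniqueNbr G φ y p) (hpv : p ≠ v) (hpx : φ p ≠ φ x) :
    G.Adj p x ∨ G.Adj p a := by
  classical
  have hy := P.isUniqueNbr_right
  let ψ := hy.swap P.isSolo
  have hψp : ψ p = φ p := hy.swap_of_ne P.isSolo hpv hp.adj.ne'
  have hψv : ψ v = φ y := hy.swap_left P.isSolo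
  have hψy : ψ y = φ v := hy.swap_right P.isSolo
  obtain ⟨z, hz, hzx⟩ := (hy.isUniqueNbr_swap P.isSolo hp hpv).seesAll
    (hy.isSolo_swap P.isSolo) hcol (φ x) (hψp.symm ▸ hpx.symm)
  rcases eq_or_ne z v with rfl | hzv
  · exact (P.color_left_ne_right (hzx.symm.trans hψv)).elim
  rcases eq_or_ne z y with rfl | hzy
  · exact (φ.valid P.isUniqueNbr_left.adj (hψy.symm.trans hzx)).elim
  rw [hy.swap_of_ne P.isSolo hzv hzy] at hzx
  rcases (P.color_eq_left_iff z).1 hzx with rfl | rfl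
  · exact .inl hz
  · exact .inr hz

/-- The unique neighbours of `v`, `x`, `y` and `a` in a suitable colour coincide: those of `v` and
`y` must see the colour class `{x, a}`, and that of `x` the class `{v, a}` which arises when
the colours of `v` and `x` are exchanged. -/
theorem exists_common_nbr [G.LocallyFinite] (P : PentagonConfig G φ v x y a)
    (hfree : TwoK2Free G) (hn : 7 ≤ n) (hdeg : ∀ t, G.degree t ≤ n + 1)
    (hcol : ¬ G.Colorable n) :
    ∃ w, IsUniqueNbr G φ v w ∧ IsUniqueNbr G φ x w ∧ IsUniqueNbr G φ y w ∧ G.Adj a w := by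
  obtain ⟨c, pv, px, py, pa, hpv, hpx, hpy, hpa, hpvc, hpxc, hpyc, hpac⟩ :=
    P.exists_isUniqueNbr_same_color hn hdeg hcol
  have hcx : φ x ≠ c := hpxc ▸ φ.valid hpx.adj
  have hcv : φ v ≠ c := hpvc ▸ φ.valid hpv.adj
  have hpa_eq : pa = px := by
    rcases P.adj_or_of_isUniqueNbr_left hcol hpx (by grind) with h | h
    · have hpv_eq : px = pv := hpv.eq h.symm (hpxc.trans hpvc.symm)
      rcases hfree.adj_or_s1 hpa.adj P.isUniqueNbr_left.adj with h' | h' | h' | h'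
      · exact (P.not_adj_far h'.symm).elim
      · exact (φ.valid h' P.color_eq_left).elim
      · exact (hpv.eq h'.symm (hpac.trans hpvc.symm)).trans hpv_eq.symm
      · exact hpx.eq h'.symm (hpac.trans hpxc.symm)
    · exact (hpa.eq h.symm (hpxc.trans hpac.symm)).symm
  have hpv_eq : pv = px := by
    rcases P.adj_or_of_isUniqueNbr_solo hcol hpv (hpvc ▸ hcx.symm) with h | h
    · exact hpx.eq h.symm (hpvc.trans hpxc.symm)
    · exact (hpa.eq h.symm (hpvc.trans hpac.symm)).trans hpa_eq
  have hpy_eq : py = px := by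
    rcases P.adj_or_of_isUniqueNbr_right hcol hpy (by grind) (hpyc ▸ hcx.symm) with h | h
    · exact hpx.eq h.symm (hpyc.trans hpxc.symm)
    · exact (hpa.eq h.symm (hpyc.trans hpac.symm)).trans hpa_eq
  exact ⟨px, hpv_eq ▸ hpv, hpx, hpy_eq ▸ hpy, hpa_eq ▸ hpa.adj⟩

theorem not_adj_of_common_nbr {w b : V} [Fintype (G.neighborSet w)]
    (P : PentagonConfig G φ v x y a) (hw : SeesAll G φ w) (hdeg : G.degree w ≤ n + 1)
    (hwv : G.Adj w v) (hwx : G.Adj w x) (hwy : G.Adj w y) (hwa : G.Adj w a) (hxb : G.Adj x b)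
    (hby : φ b = φ y) : ¬ G.Adj w b := by
  classical
  intro hwb
  have hle := hw.card_le hdeg (s := {v, x, y, a, b}) (t := {φ v, φ x, φ y})
    (by simp [hwv, hwx, hwy, hwa, hwb]) (by simp [P.color_eq_left, hby])
  have hvx := P.isUniqueNbr_left.adj
  have hvy := P.isUniqueNbr_right.adj
  have hbv : b ≠ v := fun h ↦ φ.valid hvy (h ▸ hby)
  have hby' : b ≠ y := fun h ↦ P.not_adj (h ▸ hxb)
  have hba : b ≠ a := fun h ↦ P.color_left_ne_right (P.color_eq_left.symm.trans (h ▸ hby))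
  have hxy : x ≠ y := fun h ↦ P.color_left_ne_right (congrArg φ h)
  have hcard : ({v, x, y, a, b} : Finset V).card = 5 := by
    simp [hvx.ne, hvy.ne, P.far_ne_solo.symm, hbv.symm, hxy, P.far_ne_left.symm, hxb.ne,
      P.adj.ne, hby'.symm, hba.symm]
  have := Finset.card_le_three (a := φ v) (b := φ x) (c := φ y)
  omega

theorem false [G.LocallyFinite] (P : PentagonConfig G φ v x y a) (hfree : TwoK2Free G)
    (hn : 7 ≤ n) (hdeg : ∀ t, G.degree t ≤ n + 1) (hcol : ¬ G.Colorable n) : False := by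
  have hvy := P.isUniqueNbr_right
  obtain ⟨w, hvw, hxw, hyw, haw⟩ := P.exists_common_nbr hfree hn hdeg hcol
  obtain ⟨b, z, hxb, hbz, hby, hzw⟩ := P.isUniqueNbr_left.exists_adj_adj P.isSolo hcol
    (φ.valid hvy.adj).symm P.color_left_ne_right.symm (φ.valid hvw.adj).symm
    (φ.valid hyw.adj)
  have hwb : ¬ G.Adj w b := P.not_adj_of_common_nbr (hvw.seesAll P.isSolo hcol) (hdeg w)
    hvw.adj.symm hxw.adj.symm hyw.adj.symm haw.symm hxb hby
  have hzne : z ≠ w := fun h ↦ hwb (h ▸ hbz.symm)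
  rcases hfree.adj_or_s1 hbz hvy.adj with h | h | h | h
  · exact P.not_adj (hvy.eq h.symm hby ▸ hxb)
  · exact φ.valid h hby
  · exact hzne (hvw.eq h.symm hzw)
  · exact hzne (hyw.eq h.symm hzw)

end PentagonConfig

namespace TwoK2Free

theorem seesTwice_of_isUniqueNbr [G.LocallyFinite] {φ : G.Coloring (Fin (n + 1))}
    (hfree : TwoK2Free G) (hn : 7 ≤ n) (hdeg : ∀ t, G.degree t ≤ n + 1)
    (hcol : ¬ G.Colorable n) (hv : IsSolo φ v) (hx : IsUniqueNbr G φ v x)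
    (hy : IsUniqueNbr G φ v y) (hne : x ≠ y) (hxy : ¬ G.Adj x y) : SeesTwice G φ y (φ x) := by
  by_contra htwice
  obtain ⟨ψ, a, P⟩ := hfree.exists_pentagonConfig hcol hv hx hy hne hxy htwice
  exact P.false hfree hn hdeg hcol

theorem adj_of_isUniqueNbr_of_seesTwice [G.LocallyFinite] {φ : G.Coloring (Fin (n + 1))} {w : V}
    {c : Fin (n + 1)} (hfree : TwoK2Free G) (hn : 7 ≤ n) (hdeg : ∀ t, G.degree t ≤ n + 1)
    (hcol : ¬ G.Colorable n) (hv : IsSolo φ v) (hw : IsUniqueNbr G φ v w)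
    (hx : IsUniqueNbr G φ v x) (hne : w ≠ x) (hc : SeesTwice G φ x c) (hwc : φ w ≠ c) :
    G.Adj w x := by
  by_contra h
  have hw := hfree.seesTwice_of_isUniqueNbr hn hdeg hcol hv hw hx hne h
  exact hwc ((hx.seesAll hv hcol).eq_of_seesTwice (hdeg x) hw hc)

theorem adj_or_adj_of_pentagon {φ : G.Coloring α} {w b : V} (hfree : TwoK2Free G)
    (hx : IsUniqueNbr G φ v x) (hy : IsUniqueNbr G φ v y) (hxy : ¬ G.Adj x y) (hw : G.Adj v w)
    (hxb : G.Adj x b) (hby : φ b = φ y) (hya : G.Adj y a) (hax : φ a = φ x) :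
    G.Adj w a ∨ G.Adj w b := by
  have hva : ¬ G.Adj v a := fun h ↦ hxy (hx.eq h hax ▸ hya.symm)
  have hvb : ¬ G.Adj v b := fun h ↦ hxy (hy.eq h hby ▸ hxb)
  have hab : G.Adj a b := by
    rcases hfree.adj_or_s1 hxb hya with h | h | h | h
    · exact (hxy h).elim
    · exact (φ.valid h hax.symm).elim
    · exact (φ.valid h hby).elim
    · exact h.symm
  rcases hfree.adj_or_s1 hw hab with h | h | h | h
  · exact (hva h).elim
  · exact (hvb h).elim
  · exact .inl h
  · exact .inr h

theorem adj_of_isUniqueNbr [G.LocallyFinite] {φ : G.Coloring (Fin (n + 1))}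
    (hfree : TwoK2Free G) (hn : 7 ≤ n) (hdeg : ∀ t, G.degree t ≤ n + 1)
    (hcol : ¬ G.Colorable n) (hv : IsSolo φ v) (hx : IsUniqueNbr G φ v x)
    (hy : IsUniqueNbr G φ v y) (hne : x ≠ y) : G.Adj x y := by
  by_contra hxy
  have hxtwice : SeesTwice G φ x (φ y) :=
    hfree.seesTwice_of_isUniqueNbr hn hdeg hcol hv hy hx hne.symm (hxy ∘ .symm)
  have hytwice : SeesTwice G φ y (φ x) :=
    hfree.seesTwice_of_isUniqueNbr hn hdeg hcol hv hx hy hne hxy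
  obtain ⟨e, he⟩ := (hv.seesAll hcol).exists_forall_seesTwice_eq (hdeg v)
  obtain ⟨c, hc⟩ := exists_notMem_of_card_le (s := {φ v, φ x, φ y, e})
    (Finset.card_le_four.trans (by omega))
  simp only [Finset.mem_insert, Finset.mem_singleton, not_or] at hc
  obtain ⟨hcv, hcx, hcy, hce⟩ := hc
  obtain ⟨w, hw, rfl⟩ := (hv.seesAll hcol).exists_isUniqueNbr hcv fun h ↦ hce (he c h)
  have hwx : G.Adj w x := hfree.adj_of_isUniqueNbr_of_seesTwice hn hdeg hcol hv hw hx
    (fun h ↦ hcx (congrArg φ h)) hxtwice hcy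
  have hwy : G.Adj w y := hfree.adj_of_isUniqueNbr_of_seesTwice hn hdeg hcol hv hw hy
    (fun h ↦ hcy (congrArg φ h)) hytwice hcx
  obtain ⟨b, b', hb, hxb, hxb', hby, hby'⟩ := hxtwice
  obtain ⟨a, a', ha, hya, hya', hax, hax'⟩ := hytwice
  have hwsees := hw.seesAll hv hcol
  have hbb' : ¬ (G.Adj w b ∧ G.Adj w b') := fun h ↦
    hwsees.false_of_three_nbrs (hdeg w) hwy h.1 h.2 (fun h ↦ hxy (h ▸ hxb)) (fun h ↦ hxy (h ▸ hxb'))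
      hb hby hby'
  have haa' : ¬ (G.Adj w a ∧ G.Adj w a') := fun h ↦
    hwsees.false_of_three_nbrs (hdeg w) hwx h.1 h.2 (fun h ↦ hxy (h ▸ hya.symm))
      (fun h ↦ hxy (h ▸ hya'.symm)) ha hax hax'
  have hab := hfree.adj_or_adj_of_pentagon hx hy hxy hw.adj hxb hby hya hax
  have hab' := hfree.adj_or_adj_of_pentagon hx hy hxy hw.adj hxb' hby' hya hax
  have ha'b := hfree.adj_or_adj_of_pentagon hx hy hxy hw.adj hxb hby hya' hax'
  have ha'b' := hfree.adj_or_adj_of_pentagon hx hy hxy hw.adj hxb' hby' hya' hax'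
  tauto

end TwoK2Free

/-- A clique `K` meeting every colour class except that of `d`, and without a common neighbour,
which would extend it to a clique with as many vertices as there are colours. -/
structure IsNearTransversal (G : SimpleGraph V) (φ : V → α) (K : Set V) (d : α) : Prop where
  isClique : G.IsClique K
  color_ne : ∀ x ∈ K, φ x ≠ d
  exists_mem : ∀ c ≠ d, ∃ x ∈ K, φ x = c
  exists_not_adj : ∀ w, ∃ x ∈ K, ¬ G.Adj w x

/-- The solo vertex `v` together with its unique neighbours, the candidate for a near transversal
clique. -/
def soloStar (G : SimpleGraph V) (φ : V → α) (v : V) : Set V :=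
  insert v {x | IsUniqueNbr G φ v x}

theorem mem_soloStar_self : v ∈ soloStar G φ v :=
  Set.mem_insert _ _

theorem IsUniqueNbr.mem_soloStar (hx : IsUniqueNbr G φ v x) : x ∈ soloStar G φ v :=
  Set.mem_insert_of_mem _ hx

theorem IsSolo.seesAll_of_mem_soloStar {φ : G.Coloring (Fin (n + 1))} (hv : IsSolo φ v)
    (hcol : ¬ G.Colorable n) (hx : x ∈ soloStar G φ v) : SeesAll G φ x := by
  rcases hx with rfl | hx
  · exact hv.seesAll hcol
  · exact hx.seesAll hv hcol

theorem not_cliqueFree_of_pairwise_adj {m : ℕ} (f : Fin m → V)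
    (hf : Pairwise fun i j ↦ G.Adj (f i) (f j)) : ¬ G.CliqueFree m :=
  let g : SimpleGraph.completeGraph (Fin m) →g G := ⟨f, fun h ↦ hf h⟩
  SimpleGraph.IsContained.not_cliqueFree ⟨g.toCopy g.injective_of_top_hom⟩

namespace TwoK2Free

theorem isClique_soloStar [G.LocallyFinite] {φ : G.Coloring (Fin (n + 1))}
    (hfree : TwoK2Free G) (hn : 7 ≤ n) (hdeg : ∀ t, G.degree t ≤ n + 1)
    (hcol : ¬ G.Colorable n) (hv : IsSolo φ v) : G.IsClique (soloStar G φ v) := by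
  refine SimpleGraph.isClique_insert.2 ⟨?_, fun _ hx _ ↦ hx.adj⟩
  exact fun _ hx _ hy ↦ hfree.adj_of_isUniqueNbr hn hdeg hcol hv hx hy

/-- The missing colour exists as `G` has no clique on `n + 1` vertices. The vertex `v` sees it
repeatedly, since it is not the colour of a unique neighbour, and hence sees no other one so. -/
theorem exists_isNearTransversal [G.LocallyFinite] {φ : G.Coloring (Fin (n + 1))}
    (hfree : TwoK2Free G) (hn : 7 ≤ n) (hdeg : ∀ t, G.degree t ≤ n + 1)
    (hclique : G.CliqueFree (n + 1)) (hcol : ¬ G.Colorable n) (hv : IsSolo φ v) :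
    ∃ d, IsNearTransversal G φ (soloStar G φ v) d ∧ SeesTwice G φ v d := by
  classical
  have hK := hfree.isClique_soloStar hn hdeg hcol hv
  have hsees := hv.seesAll hcol
  obtain ⟨d, hd⟩ : ∃ d, ∀ x ∈ soloStar G φ v, φ x ≠ d := by
    by_contra! h
    choose f hfK hf using h
    exact not_cliqueFree_of_pairwise_adj f
      (fun i j hij ↦ hK (hfK i) (hfK j) fun h ↦ hij (by rw [← hf i, ← hf j, h])) hclique
  have htwice : SeesTwice G φ v d := by
    by_contra h
    obtain ⟨x, hx, hxd⟩ := hsees.exists_isUniqueNbr (hd v mem_soloStar_self).symm h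
    exact hd x hx.mem_soloStar hxd
  have hmem : ∀ c ≠ d, ∃ x ∈ soloStar G φ v, φ x = c := by
    intro c hcd
    rcases eq_or_ne c (φ v) with rfl | hcv
    · exact ⟨v, mem_soloStar_self, rfl⟩
    obtain ⟨x, hx, hxc⟩ := hsees.exists_isUniqueNbr hcv fun h ↦
      hcd (hsees.eq_of_seesTwice (hdeg v) h htwice)
    exact ⟨x, hx.mem_soloStar, hxc⟩
  refine ⟨d, ⟨hK, hd, hmem, fun w ↦ ?_⟩, htwice⟩
  by_contra! hwK
  have : Nonempty V := ⟨v⟩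
  choose! f hfK hf using hmem
  refine not_cliqueFree_of_pairwise_adj (Function.update f d w) (fun i j hij ↦ ?_) hclique
  have hfne : i ≠ d → j ≠ d → f i ≠ f j := fun hi hj h ↦ hij (by rw [← hf i hi, ← hf j hj, h])
  rcases eq_or_ne i d with rfl | hi
  · simpa [hij.symm] using hwK _ (hfK j hij.symm)
  rcases eq_or_ne j d with rfl | hj
  · simpa [hij] using (hwK _ (hfK i hij)).symm
  · simpa [hi, hj] using hK (hfK i hi) (hfK j hj) (hfne hi hj)

end TwoK2Free

section NearTransversal

variable {K : Set V} {κ u : V} {d : α}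

theorem IsNearTransversal.eq_of_color_eq {φ : G.Coloring α} (hK : IsNearTransversal G φ K d)
    (hx : x ∈ K) (hy : y ∈ K) (h : φ x = φ y) : x = y :=
  by_contra fun hne ↦ φ.valid (hK.isClique hx hy hne) h

theorem IsNearTransversal.seesTwice {φ : G.Coloring α} (hK : IsNearTransversal G φ K d)
    (hκ : κ ∈ K) (hu : u ∉ K) (hud : φ u ≠ d) (hκu : G.Adj κ u) : SeesTwice G φ κ (φ u) := by
  obtain ⟨m, hm, hmu⟩ := hK.exists_mem (φ u) hud
  have hκm : κ ≠ m := fun h ↦ φ.valid hκu (h ▸ hmu)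
  exact ⟨m, u, fun h ↦ hu (h ▸ hm), hK.isClique hκ hm hκm, hκu, hmu, rfl⟩

variable {φ : G.Coloring (Fin (n + 1))} {d : Fin (n + 1)}

theorem IsNearTransversal.not_seesTwice_of_adj [Fintype (G.neighborSet κ)]
    (hK : IsNearTransversal G φ K d) (hsees : SeesAll G φ κ) (hdeg : G.degree κ ≤ n + 1)
    (hκ : κ ∈ K) (hu : u ∉ K) (hud : φ u ≠ d) (hκu : G.Adj κ u) : ¬ SeesTwice G φ κ d :=
  fun h ↦ hud (hsees.eq_of_seesTwice hdeg (hK.seesTwice hκ hu hud hκu) h)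

theorem IsNearTransversal.exists_mem_notMem (hK : IsNearTransversal G φ K d)
    {s : Finset V} (hs : s.card + 1 ≤ n) : ∃ x ∈ K, x ∉ s := by
  classical
  obtain ⟨c, hc⟩ := exists_notMem_of_card_le (s := insert d (s.image φ))
    ((Finset.card_insert_le _ _).trans ((Nat.succ_le_succ Finset.card_image_le).trans hs))
  rw [Finset.mem_insert, not_or] at hc
  obtain ⟨x, hx, rfl⟩ := hK.exists_mem c hc.1
  exact ⟨x, hx, fun h ↦ hc.2 (Finset.mem_image_of_mem φ h)⟩

/-- Recolour each vertex of the missing colour `d` like one of its non-neighbours in `K`, and the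
other vertices outside `K` like `κ`. -/
theorem IsNearTransversal.colorable (hK : IsNearTransversal G φ K d) (hκ : κ ∈ K)
    (hκQ : ∀ u ∉ K, φ u ≠ d → ¬ G.Adj κ u)
    (hQ : ∀ p q, p ∉ K → φ p ≠ d → q ∉ K → φ q ≠ d → ¬ G.Adj p q)
    (hD : ∀ w, φ w = d → ∃ m ∈ K, m ≠ κ ∧ ¬ G.Adj m w) : G.Colorable n := by
  classical
  have : Nonempty V := ⟨κ⟩
  choose! m hmK hmκ hm using hD
  let f : V → Fin (n + 1) := fun z ↦ if φ z = d then φ (m z) else if z ∈ K then φ z else φ κ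
  have hinj : ∀ {x y}, x ∈ K → y ∈ K → φ x = φ y → x = y := hK.eq_of_color_eq
  let ψ : G.Coloring (Fin (n + 1)) := .mk f fun {p q} hpq ↦ by
    have hvalid := φ.valid hpq
    have hqp := hpq.symm
    have := hQ p q
    grind
  refine colorable_of_forall_ne ψ (c := d) fun z ↦ ?_
  change f z ≠ d
  have := hK.color_ne
  grind

/-- Otherwise every `κ ∈ K` would be missed by some `w` of colour `d` adjacent to the rest of `K`.
Such `w` are distinct, so three of them would be neighbours of a fourth vertex of `K`. -/
theorem IsNearTransversal.exists_forall_exists_not_adj [G.LocallyFinite]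
    (hK : IsNearTransversal G φ K d) (hn : 4 ≤ n) (hdeg : ∀ t, G.degree t ≤ n + 1)
    (hsees : ∀ κ ∈ K, SeesAll G φ κ) :
    ∃ κ ∈ K, ∀ w, φ w = d → ∃ m ∈ K, m ≠ κ ∧ ¬ G.Adj m w := by
  classical
  by_contra! hbad
  have hmiss : ∀ κ ∈ K, ∃ w, φ w = d ∧ ¬ G.Adj κ w ∧ ∀ m ∈ K, m ≠ κ → G.Adj m w := by
    intro κ hκ
    obtain ⟨w, hwd, hw⟩ := hbad κ hκ
    obtain ⟨m, hm, hmw⟩ := hK.exists_not_adj w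
    obtain rfl : m = κ := by_contra fun hne ↦ hmw (hw m hm hne).symm
    exact ⟨w, hwd, hmw ∘ .symm, hw⟩
  obtain ⟨κ₁, hκ₁, -⟩ := hK.exists_mem_notMem (s := ∅) (by rw [Finset.card_empty]; omega)
  obtain ⟨κ₂, hκ₂, hκ₂s⟩ := hK.exists_mem_notMem (s := {κ₁})
    (by rw [Finset.card_singleton]; omega)
  obtain ⟨κ₃, hκ₃, hκ₃s⟩ := hK.exists_mem_notMem (s := {κ₁, κ₂})
    ((Nat.succ_le_succ Finset.card_le_two).trans (by omega))
  obtain ⟨κ₄, hκ₄, hκ₄s⟩ := hK.exists_mem_notMem (s := {κ₁, κ₂, κ₃})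
    ((Nat.succ_le_succ Finset.card_le_three).trans hn)
  simp only [Finset.mem_insert, Finset.mem_singleton, not_or] at hκ₂s hκ₃s hκ₄s
  obtain ⟨w₁, hw₁d, -, hadj₁⟩ := hmiss κ₁ hκ₁
  obtain ⟨w₂, hw₂d, hw₂, hadj₂⟩ := hmiss κ₂ hκ₂
  obtain ⟨w₃, hw₃d, hw₃, hadj₃⟩ := hmiss κ₃ hκ₃
  refine (hsees κ₄ hκ₄).false_of_three_nbrs (hdeg κ₄) (hadj₁ κ₄ hκ₄ hκ₄s.1)
    (hadj₂ κ₄ hκ₄ hκ₄s.2.1) (hadj₃ κ₄ hκ₄ hκ₄s.2.2) ?_ ?_ ?_ (hw₂d.trans hw₁d.symm)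
    (hw₃d.trans hw₁d.symm)
  · exact fun h ↦ hw₂ (h ▸ hadj₁ κ₂ hκ₂ hκ₂s)
  · exact fun h ↦ hw₃ (h ▸ hadj₁ κ₃ hκ₃ hκ₃s.1)
  · exact fun h ↦ hw₃ (h ▸ hadj₂ κ₃ hκ₃ hκ₃s.2)

end NearTransversal

namespace TwoK2Free

variable {φ : G.Coloring (Fin (n + 1))} {d : Fin (n + 1)} {κ : V}

/-- Exchanging the colours of `v` and `κ` makes `w` a unique neighbour of the solo vertex `κ`. In
the new colouring a vertex of the clique not adjacent to `w` has a colour that `κ` sees twice. -/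
theorem exists_isUniqueNbr_forall_ne_adj [G.LocallyFinite]
    (hfree : TwoK2Free G) (hn : 7 ≤ n) (hdeg : ∀ t, G.degree t ≤ n + 1)
    (hcol : ¬ G.Colorable n) (hv : IsSolo φ v)
    (hK : IsNearTransversal G φ (soloStar G φ v) d) (hκ : κ ∈ soloStar G φ v) (hκv : κ ≠ v)
    (htwice : ¬ SeesTwice G φ κ d) :
    ∃ w, IsUniqueNbr G φ κ w ∧ φ w = d ∧ ∃ m ∈ soloStar G φ v, m ≠ v ∧ ¬ G.Adj m w ∧
      ∀ m' ∈ soloStar G φ v, m' ≠ m → G.Adj m' w := by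
  classical
  have hκ' : IsUniqueNbr G φ v κ := hκ.resolve_left hκv
  obtain ⟨w, hw, hwd⟩ :=
    (hκ'.seesAll hv hcol).exists_isUniqueNbr (hK.color_ne κ hκ).symm htwice
  have hwK : w ∉ soloStar G φ v := fun h ↦ hK.color_ne w h hwd
  have hwv : w ≠ v := fun h ↦ hwK (h ▸ mem_soloStar_self)
  let ψ := hκ'.swap hv
  have hsolo : IsSolo ψ κ := hκ'.isSolo_swap hv
  have hwψ : IsUniqueNbr G ψ κ w := hκ'.isUniqueNbr_swap hv hw hwv
  have hadj {m : V} (hm : IsUniqueNbr G ψ κ m) (hne : m ≠ w) : G.Adj m w :=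
    hfree.adj_of_isUniqueNbr hn hdeg hcol hsolo hm hwψ hne
  have hvw : G.Adj v w := hadj (hκ'.isUniqueNbr_swap_self hv) hwv.symm
  have hseen : ∀ m ∈ soloStar G φ v, ¬ G.Adj m w → m ≠ v ∧ SeesTwice G ψ κ (φ m) := by
    intro m hm hmw
    have hmv : m ≠ v := fun h ↦ hmw (h ▸ hvw)
    have hmκ : m ≠ κ := fun h ↦ hmw (h ▸ hw.adj)
    refine ⟨hmv, by_contra fun h ↦ hmw (hadj ?_ fun h ↦ hwK (h ▸ hm))⟩
    rw [← hκ'.swap_of_ne hv hmv hmκ] at h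
    exact isUniqueNbr_of_not_seesTwice (hK.isClique hκ hm hmκ.symm) h
  obtain ⟨m, hm, hmw⟩ := hK.exists_not_adj w
  have hmw' := hmw ∘ .symm
  refine ⟨w, hw, hwd, m, hm, (hseen m hm hmw').1, hmw', fun m' hm' hne ↦ ?_⟩
  by_contra hmw''
  exact hne <| hK.eq_of_color_eq hm' hm <| (hsolo.seesAll hcol).eq_of_seesTwice (hdeg κ)
    (hseen m' hm' hmw'').2 (hseen m hm hmw').2

/-- If `pq` were an edge, no vertex of the clique but `v` could see `d` twice. The vertex of colour
`d` missing only `m₁` in the clique and the neighbour of `m₁` of colour `d`, which also misses only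
one vertex, are then distinct, but have a common neighbour in the clique. -/
theorem not_adj_of_notMem_soloStar [G.LocallyFinite] {p q : V}
    (hfree : TwoK2Free G) (hn : 7 ≤ n) (hdeg : ∀ t, G.degree t ≤ n + 1)
    (hcol : ¬ G.Colorable n) (hv : IsSolo φ v)
    (hK : IsNearTransversal G φ (soloStar G φ v) d) (hvd : SeesTwice G φ v d)
    (hp : p ∉ soloStar G φ v) (hpd : φ p ≠ d) (hq : q ∉ soloStar G φ v) (hqd : φ q ≠ d) :
    ¬ G.Adj p q := by
  classical
  intro hpq
  have hvQ : ∀ u ∉ soloStar G φ v, φ u ≠ d → ¬ G.Adj v u := fun u hu hud h ↦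
    hK.not_seesTwice_of_adj (hv.seesAll hcol) (hdeg v) mem_soloStar_self hu hud h hvd
  have htwice : ∀ κ ∈ soloStar G φ v, κ ≠ v → ¬ SeesTwice G φ κ d := by
    intro κ hκ hκv
    have hsees := hv.seesAll_of_mem_soloStar hcol hκ
    have hvκ : G.Adj v κ := hK.isClique mem_soloStar_self hκ hκv.symm
    rcases hfree.adj_or_s1 hvκ hpq with h | h | h | h
    · exact (hvQ p hp hpd h).elim
    · exact (hvQ q hq hqd h).elim
    · exact hK.not_seesTwice_of_adj hsees (hdeg κ) hκ hp hpd h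
    · exact hK.not_seesTwice_of_adj hsees (hdeg κ) hκ hq hqd h
  obtain ⟨κ₁, hκ₁, hκ₁v⟩ := hK.exists_mem_notMem (s := {v})
    (by rw [Finset.card_singleton]; omega)
  rw [Finset.mem_singleton] at hκ₁v
  obtain ⟨w₁, -, hw₁d, m₁, hm₁, hm₁v, hm₁w₁, hadj₁⟩ :=
    hfree.exists_isUniqueNbr_forall_ne_adj hn hdeg hcol hv hK hκ₁ hκ₁v (htwice κ₁ hκ₁ hκ₁v)
  obtain ⟨w₂, hw₂, hw₂d, m₂, -, -, -, hadj₂⟩ :=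
    hfree.exists_isUniqueNbr_forall_ne_adj hn hdeg hcol hv hK hm₁ hm₁v (htwice m₁ hm₁ hm₁v)
  obtain ⟨κ, hκ, hκs⟩ := hK.exists_mem_notMem (s := {v, m₁, m₂})
    ((Nat.succ_le_succ Finset.card_le_three).trans (by omega))
  simp only [Finset.mem_insert, Finset.mem_singleton, not_or] at hκs
  obtain ⟨hκv, hκm₁, hκm₂⟩ := hκs
  have hw : w₁ = w₂ := by_contra fun hne ↦ htwice κ hκ hκv
    ⟨w₁, w₂, hne, hadj₁ κ hκ hκm₁, hadj₂ κ hκ hκm₂, hw₁d, hw₂d⟩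
  exact hm₁w₁ (hw ▸ hw₂.adj)

theorem colorable_of_isSolo [G.LocallyFinite] (hfree : TwoK2Free G) (hn : 7 ≤ n)
    (hdeg : ∀ t, G.degree t ≤ n + 1) (hclique : G.CliqueFree (n + 1)) (hv : IsSolo φ v) :
    G.Colorable n := by
  by_contra hcol
  obtain ⟨d, hK, hvd⟩ := hfree.exists_isNearTransversal hn hdeg hclique hcol hv
  have hQ : ∀ p q, p ∉ soloStar G φ v → φ p ≠ d → q ∉ soloStar G φ v → φ q ≠ d → ¬ G.Adj p q :=
    fun p q ↦ hfree.not_adj_of_notMem_soloStar hn hdeg hcol hv hK hvd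
  have hκQ : ∀ κ ∈ soloStar G φ v, SeesTwice G φ κ d →
      ∀ u ∉ soloStar G φ v, φ u ≠ d → ¬ G.Adj κ u := fun κ hκ hκd u hu hud h ↦
    hK.not_seesTwice_of_adj (hv.seesAll_of_mem_soloStar hcol hκ) (hdeg κ) hκ hu hud h hκd
  by_cases hall : ∀ κ ∈ soloStar G φ v, SeesTwice G φ κ d
  · obtain ⟨κ, hκ, hmiss⟩ := hK.exists_forall_exists_not_adj (by omega) hdeg fun κ hκ ↦
      hv.seesAll_of_mem_soloStar hcol hκ
    exact hcol (hK.colorable hκ (hκQ κ hκ (hall κ hκ)) hQ hmiss)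
  · push Not at hall
    obtain ⟨κ, hκ, hκd⟩ := hall
    have hκv : κ ≠ v := fun h ↦ hκd (h ▸ hvd)
    obtain ⟨w, hw, hwd, m, hm, hmv, hmw, -⟩ :=
      hfree.exists_isUniqueNbr_forall_ne_adj hn hdeg hcol hv hK hκ hκv hκd
    refine hcol (hK.colorable mem_soloStar_self (hκQ v mem_soloStar_self hvd) hQ fun w' hw' ↦ ?_)
    rcases eq_or_ne w' w with rfl | hne
    · exact ⟨m, hm, hmv, hmw⟩
    · exact ⟨κ, hκ, hκv, fun h ↦ hne (hw.eq h (hw'.trans hwd.symm))⟩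

end TwoK2Free

/-- Give the new vertex a colour of its own and apply `colorable_of_isSolo`. -/
theorem TwoK2Free.colorable_spanningCoe_induce_insert [G.LocallyFinite] {s : Set V}
    (hfree : TwoK2Free G) (hn : 7 ≤ n) (hdeg : ∀ t, G.degree t ≤ n + 1)
    (hclique : G.CliqueFree (n + 1)) (hs : (G.induce s).spanningCoe.Colorable n) :
    (G.induce (insert v s)).spanningCoe.Colorable n := by
  classical
  obtain ⟨C⟩ := hs
  let φ : (G.induce (insert v s)).spanningCoe.Coloring (Fin (n + 1)) :=
    .mk (fun z ↦ if z = v then Fin.last n else (C z).castSucc) fun {p q} hpq ↦ by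
      have hvalid := C.valid (v := p) (w := q)
      rw [spanningCoe_induce_adj] at hpq hvalid
      have hne := hpq.2.2.ne
      have := Fin.castSucc_ne_last (C p)
      have := Fin.castSucc_ne_last (C q)
      have := Fin.castSucc_injective n (a₁ := C p) (a₂ := C q)
      grind
  have hsolo : IsSolo φ v := by
    intro z (hz : ite _ _ _ = ite _ _ _)
    by_contra hne
    simp only [hne, if_false, if_true] at hz
    exact Fin.castSucc_ne_last _ hz
  have hle : (G.induce (insert v s)).spanningCoe ≤ G := SimpleGraph.spanningCoe_induce_le G _
  have : (G.induce (insert v s)).spanningCoe.LocallyFinite := fun t ↦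
    Set.fintypeSubset (G.neighborSet t) fun _ h ↦ hle h
  refine (hfree.spanningCoe_induce _).colorable_of_isSolo hn (fun t ↦ ?_) (hclique.anti hle) hsolo
  exact (SimpleGraph.degree_le_of_le hle).trans (hdeg t)

theorem TwoK2Free.colorable [Finite V] [G.LocallyFinite] (hfree : TwoK2Free G) (hn : 7 ≤ n)
    (hdeg : ∀ t, G.degree t ≤ n + 1) (hclique : G.CliqueFree (n + 1)) : G.Colorable n := by
  have hs : ∀ s : Set V, (G.induce s).spanningCoe.Colorable n := by
    intro s
    induction s, s.toFinite using Set.Finite.induction_on with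
    | empty =>
      exact ⟨.mk (fun _ ↦ ⟨0, by omega⟩) fun h ↦ (spanningCoe_induce_adj.1 h).1.elim⟩
    | insert _ _ ih => exact hfree.colorable_spanningCoe_induce_insert hn hdeg hclique ih
  simpa using hs Set.univ

end

theorem borodin_kostochka_of_twoK2Free_general
    {V : Type*} [Fintype V] (G : SimpleGraph V) [DecidableRel G.Adj]
    (hfree : TwoK2Free G) (hΔ : 8 ≤ G.maxDegree) :
    G.chromaticNumber ≤ (max G.cliqueNum (G.maxDegree - 1) : ℕ) := by
  refine (hfree.colorable (by omega) (fun t ↦ ?_) ?_).chromaticNumber_le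
  · have := G.degree_le_maxDegree t
    omega
  · intro s hs
    have := hs.isClique.card_le_cliqueNum
    have := hs.card_eq
    omega

theorem borodin_kostochka_of_twoK2Free
    {V : Type*} [Fintype V] (G : SimpleGraph V) [DecidableRel G.Adj]
    (hfree : TwoK2Free G) (hΔ : 9 ≤ G.maxDegree) :
    G.chromaticNumber ≤ (max G.cliqueNum (G.maxDegree - 1) : ℕ) :=
  borodin_kostochka_of_twoK2Free_general G hfree (by omega)
end
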